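/- arXiv:1709.10013 — 5 statements merged into one kernel-verified Lean document; each statement's English description precedes it below -/
import Mathlib

section
/- Let A be the compartmental matrix of a linear compartment model with n ≥ 2 compartments, with labels in a commutative ring, let A_{11} denote the matrix obtained from A by deleting row 1 and column 1, and write det(λI − A_{11}) = λ^{n−1} + d_{n−2}λ^{n−2} + ⋯ + d_1λ + d_0. Then for each i = 0, 1, …, n−2, the coefficient d_i equals the sum, over all spanning incoming forests F of the graph G̃_1 having exactly n−i−1 edges, of the product π_F of the edge labels of F; that is, d_i = Σ_{F ∈ 𝓕_{n−i−1}(G̃_1)} π_F. -/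
/-!
The characteristic matrix `L = X • I - A₁₁` is expanded by multilinearity in its columns. Column `j`
equals `X • e_j + ∑ a_{tj} • (e_j - e_t)`, the sum being over the edges `j → t` of `G̃₁`, with
`e_0 = 0`. Hence `det L` is a sum over all ways `f` of choosing, at each vertex `j ≠ 0`, either no
edge (contributing a factor `X`) or one outgoing edge (contributing its label), of the product of
these factors times the determinant of the matrix with columns `e_j` or `e_j - e_t`.

That determinant is `1` if the chosen edges contain no directed cycle (the matrix is unitriangular
after ordering the vertices by their distance to a sink, `det_choiceMatrix_of_isRank`) and `0`
otherwise (the columns along a directed cycle sum to zero, `det_choiceMatrix_of_isCycleSet`). For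
a graph with at most one outgoing edge per vertex, having no directed cycle is the same as being
an incoming forest (`IsRank.isIncomingForest`, `IsCycleSet.not_isIncomingForest`). So `det L` is the
sum of `π_F X^{n-1-|F|}` over all incoming forests `F` (`coeff_det_eq_forestSum`).
-/

open scoped Classical

/-- An *incoming forest*: a finite set of directed edges such that the underlying
undirected graph has no cycles and each vertex has at most one outgoing edge. -/
def IsIncomingForest {V : Type*} (F : Finset (V × V)) : Prop :=
  (∀ e ∈ F, e.1 ≠ e.2) ∧
  (∀ e ∈ F, (e.2, e.1) ∉ F) ∧
  (SimpleGraph.fromRel fun u v => (u, v) ∈ F).IsAcyclic ∧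
  (∀ e ∈ F, ∀ e' ∈ F, e.1 = e'.1 → e = e')

/-- Sum over all spanning incoming forests with exactly `k` edges contained in `E`
of the products of the edge labels. -/
noncomputable def forestSum {V R : Type*} [DecidableEq V] [CommRing R]
    (E : Finset (V × V)) (w : V × V → R) (k : ℕ) : R :=
  ∑ F ∈ E.powerset.filter (fun F => F.card = k ∧ IsIncomingForest F), ∏ e ∈ F, w e

/-- A linear compartment model on vertex type `V` with labels in `R`. -/
structure LinCompModel (V : Type*) (R : Type*) where
  edges : Finset (V × V)
  label : V × V → R
  leak : Finset V
  leakLabel : V → R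
  no_loops : ∀ e ∈ edges, e.1 ≠ e.2

/-- The compartmental matrix. -/
noncomputable def compMatrix {V R : Type*} [Fintype V] [DecidableEq V] [CommRing R]
    (M : LinCompModel V R) : Matrix V V R :=
  Matrix.of fun i j =>
    if i = j then
      -(if i ∈ M.leak then M.leakLabel i else 0)
        - ∑ e ∈ M.edges.filter (fun e => e.1 = i), M.label e
    else if (j, i) ∈ M.edges then M.label (j, i) else 0

/-- The edge set of the graph `G̃₁` (vertex `0` is `none`): compartment `1` (here the
vertex `⟨0, _⟩ : Fin n`) is deleted; edges of `G` not meeting it are kept, and `j → 0`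
is an edge whenever `j` is a leak of `G` or `j → 1` is an edge of `G`. -/
noncomputable def aug1Edges {R : Type*} {n : ℕ} (hn : 0 < n) (M : LinCompModel (Fin n) R) :
    Finset (Option (Fin n) × Option (Fin n)) :=
  ((M.edges.filter (fun e => e.1 ≠ ⟨0, hn⟩ ∧ e.2 ≠ ⟨0, hn⟩)).image
      (fun e => (some e.1, some e.2))) ∪
    ((Finset.univ.filter
        (fun j : Fin n => j ≠ ⟨0, hn⟩ ∧ (j ∈ M.leak ∨ (j, (⟨0, hn⟩ : Fin n)) ∈ M.edges))).image
      (fun j => (some j, none)))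

/-- The edge labels of `G̃₁`: the label of `j → 0` is `a_{0j} + a_{1j}` if `j` is a leak
and `j → 1` is an edge, `a_{0j}` if `j` is a leak only, and `a_{1j}` if `j → 1` only. -/
noncomputable def aug1Label {R : Type*} [CommRing R] {n : ℕ} (hn : 0 < n)
    (M : LinCompModel (Fin n) R) : Option (Fin n) × Option (Fin n) → R :=
  fun e => match e with
    | (some j, some i) => M.label (j, i)
    | (some j, none) =>
        (if j ∈ M.leak then M.leakLabel j else 0) +
          (if (j, (⟨0, hn⟩ : Fin n)) ∈ M.edges then M.label (j, ⟨0, hn⟩) else 0)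
    | _ => 0

/-! ### Incoming forests and directed cycles -/

section Forests

/-- `r` is a rank function for `F`: it strictly drops along every directed edge. Such an `r`
exists exactly when `F` has no directed cycle. -/
def IsRank {V : Type*} (F : Finset (V × V)) (r : V → ℕ) : Prop :=
  ∀ a b, (a, b) ∈ F → r b < r a

/-- Each vertex has at most one outgoing edge. -/
def OutUnique {V : Type*} (F : Finset (V × V)) : Prop :=
  ∀ a b c, (a, b) ∈ F → (a, c) ∈ F → b = c

/-- `O` is a nonempty union of vertex-disjoint directed cycles of `F`, traversed by `g`. -/
def IsCycleSet {V : Type*} (F : Finset (V × V)) (g : V → V) (O : Set V) : Prop :=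
  O.Nonempty ∧ Set.BijOn g O O ∧ O ⊆ Function.periodicPts g ∧ ∀ v ∈ O, (v, g v) ∈ F

/-- A vertex of maximal rank on an undirected cycle would have two distinct outgoing edges. -/
lemma IsRank.isIncomingForest {V : Type*} {F : Finset (V × V)} {r : V → ℕ}
    (hr : IsRank F r) (hF : OutUnique F) : IsIncomingForest F := by
  refine ⟨?_, ?_, ?_, ?_⟩
  · rintro ⟨a, b⟩ h hab
    simp only at hab
    subst hab
    exact lt_irrefl _ (hr _ _ h)
  · rintro ⟨a, b⟩ h h'
    exact lt_asymm (hr _ _ h) (hr _ _ h')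
  · intro v c hc
    obtain ⟨m, hm, hmax⟩ := c.support.toFinset.exists_max_image r ⟨v, by simp⟩
    rw [List.mem_toFinset] at hm
    have hc' := hc.rotate hm
    have key : ∀ u ∈ c.support,
        (SimpleGraph.fromRel fun u v => (u, v) ∈ F).Adj m u → (m, u) ∈ F := by
      intro u hu hadj
      rw [SimpleGraph.fromRel_adj] at hadj
      rcases hadj.2 with h | h
      · exact h
      · have := hr _ _ h
        have := hmax u (by simpa using hu)
        omega
    have hsup : ∀ u ∈ (c.rotate m hm).support, u ∈ c.support := by
      intro u hu
      simpa using hu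
    refine hc'.snd_ne_penultimate (hF m _ _ (key _ (hsup _ ?_) ?_) (key _ (hsup _ ?_) ?_))
    · exact SimpleGraph.Walk.getVert_mem_support _ _
    · exact SimpleGraph.Walk.adj_snd hc'.not_nil
    · exact SimpleGraph.Walk.getVert_mem_support _ _
    · exact (SimpleGraph.Walk.adj_penultimate hc'.not_nil).symm
  · rintro ⟨a, b⟩ h ⟨a', c⟩ h' haa
    simp only at haa
    subst haa
    rw [hF _ _ _ h h']

/-- Follow the outgoing edges: either every vertex reaches a sink, and the number of steps needed
is a rank function, or some vertex can be followed forever, and hence into a directed cycle. -/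
lemma exists_isRank_or_isCycleSet {V : Type*} [Finite V] {F : Finset (V × V)}
    (hF : OutUnique F) : (∃ r, IsRank F r) ∨ ∃ g O, IsCycleSet F g O := by
  let D : Set V := {v | ∃ t, (v, t) ∈ F}
  let g : V → V := fun v => if h : ∃ t, (v, t) ∈ F then h.choose else v
  have hg : ∀ v ∈ D, (v, g v) ∈ F := by
    intro v hv
    have hv' : ∃ t, (v, t) ∈ F := hv
    simp only [g, dif_pos hv']
    exact hv'.choose_spec
  have hg' : ∀ v, v ∉ D → g v = v := by
    intro v hv
    have hv' : ¬ ∃ t, (v, t) ∈ F := hv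
    simp only [g, dif_neg hv']
  by_cases hex : ∀ v, ∃ k, g^[k] v ∉ D
  · left
    refine ⟨fun v => Nat.find (hex v), ?_⟩
    intro a b hab
    have haD : a ∈ D := ⟨b, hab⟩
    have hgb : g a = b := hF _ _ _ (hg a haD) hab
    have hs := Nat.find_spec (hex a)
    rcases hk : Nat.find (hex a) with _ | k
    · rw [hk] at hs
      exact absurd haD hs
    · rw [hk, Function.iterate_succ_apply, hgb] at hs
      simp only [hk]
      exact Nat.lt_succ_of_le (Nat.find_min' _ hs)
  -- The cycle set consists of all periodic points that are not sinks (sinks are fixed by `g`).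
  · right
    push Not at hex
    obtain ⟨x, hx⟩ := hex
    have hper : ∃ m, g^[m] x ∈ Function.periodicPts g := by
      obtain ⟨m, k, hmk, h⟩ := Finite.exists_ne_map_eq_of_infinite (fun k : ℕ => g^[k] x)
      rcases lt_or_gt_of_ne hmk with hlt | hlt
      · refine ⟨m, k - m, by omega, ?_⟩
        rw [Function.IsPeriodicPt, Function.IsFixedPt, ← Function.iterate_add_apply,
          Nat.sub_add_cancel hlt.le, h]
      · refine ⟨k, m - k, by omega, ?_⟩
        rw [Function.IsPeriodicPt, Function.IsFixedPt, ← Function.iterate_add_apply,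
          Nat.sub_add_cancel hlt.le, h]
    obtain ⟨m, hm⟩ := hper
    have hb := Function.bijOn_periodicPts g
    refine ⟨g, Function.periodicPts g ∩ D, ⟨_, hm, hx m⟩, ⟨?_, ?_, ?_⟩,
      Set.inter_subset_left, fun v hv => hg v hv.2⟩
    · rintro v ⟨hv, hvD⟩
      refine ⟨hb.mapsTo hv, ?_⟩
      by_contra hn
      have := hb.injOn (hb.mapsTo hv) hv (hg' _ hn)
      rw [this] at hn
      exact hn hvD
    · exact hb.injOn.mono Set.inter_subset_left
    · rintro v ⟨hv, hvD⟩
      obtain ⟨u, hu, rfl⟩ := hb.surjOn hv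
      refine ⟨u, ⟨hu, ?_⟩, rfl⟩
      by_contra hn
      rw [hg' _ hn] at hvD
      exact hn hvD

/-- On a directed cycle of length at least three, the edge from `x` to `g x` is not a bridge, since
the rest of the cycle leads from `g x` back to `x`; shorter cycles are excluded explicitly in
`IsIncomingForest`. -/
lemma IsCycleSet.not_isIncomingForest {V : Type*} {F : Finset (V × V)} {g : V → V} {O : Set V}
    (h : IsCycleSet F g O) : ¬ IsIncomingForest F := by
  rintro ⟨hloop, htwo, hac, -⟩
  obtain ⟨⟨x, hx⟩, hbij, hper, hE⟩ := h
  have hO : ∀ k, g^[k] x ∈ O := fun k => (hbij.mapsTo.iterate k) hx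
  have hadj : ∀ v ∈ O, (SimpleGraph.fromRel fun u v => (u, v) ∈ F).Adj v (g v) := by
    intro v hv
    rw [SimpleGraph.fromRel_adj]
    exact ⟨hloop _ (hE v hv), Or.inl (hE v hv)⟩
  have hbr := SimpleGraph.isAcyclic_iff_forall_adj_isBridge.1 hac (hadj x hx)
  rw [SimpleGraph.isBridge_iff] at hbr
  apply hbr
  have hp := Function.minimalPeriod_pos_of_mem_periodicPts (hper hx)
  have key : ∀ k, k + 1 ≤ Function.minimalPeriod g x →
      ((SimpleGraph.fromRel fun u v => (u, v) ∈ F).deleteEdges {s(x, g x)}).Reachable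
        (g x) (g^[k + 1] x) := by
    intro k
    induction k with
    | zero => intro _; exact SimpleGraph.Reachable.refl _
    | succ k ih =>
      intro hk
      refine (ih (by omega)).trans (SimpleGraph.Adj.reachable ?_)
      have hne : g^[k + 1] x ≠ x := fun h0 =>
        Function.not_isPeriodicPt_of_pos_of_lt_minimalPeriod (by omega) (by omega) h0
      rw [Function.iterate_succ_apply' g (k + 1), SimpleGraph.deleteEdges_adj]
      refine ⟨hadj _ (hO _), ?_⟩
      intro h1
      simp only [Set.mem_singleton_iff, Sym2.eq_iff] at h1
      rcases h1 with ⟨h1, -⟩ | ⟨h1, h2⟩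
      · exact hne h1
      · rw [h1] at h2
        have := hE (g x) (hO 1)
        rw [h2] at this
        exact htwo _ (hE x hx) this
  have := key (Function.minimalPeriod g x - 1) (by omega)
  rw [Nat.sub_add_cancel hp, Function.iterate_minimalPeriod] at this
  exact this.symm

end Forests

/-! ### The determinant of a choice of outgoing edges -/

/-- The edge set encoded by a choice `f` of at most one outgoing edge at each source `s j`:
`f j = some t` selects the edge `s j → t`, and `f j = none` selects no edge at `s j`. -/
noncomputable def edgesOf {W V : Type*} [Fintype W] (s : W → V) (f : W → Option V) :
    Finset (V × V) :=
  (Finset.univ.filter fun j => f j ≠ none).image fun j => (s j, (f j).getD (s j))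

/-- The matrix `I - N`, where `N` is the adjacency matrix, restricted to the sources, of the edges
chosen by `f`: column `j` is `e_j` if `f j = none` or the target of the chosen edge is not a
source, and `e_j - e_i` if the chosen edge is `s j → s i`. -/
noncomputable def choiceMatrix {W V : Type*} [DecidableEq W] (S : Type*) [CommRing S] (s : W → V)
    (f : W → Option V) : Matrix W W S :=
  Matrix.of fun i j => (if i = j then 1 else 0) - (if f j = some (s i) then 1 else 0)

section Det
variable {W V S : Type*} [Fintype W] {s : W → V}

lemma mem_edgesOf {f : W → Option V} {a b : V} :
    (a, b) ∈ edgesOf s f ↔ ∃ j, s j = a ∧ f j = some b := by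
  simp only [edgesOf, Finset.mem_image, Finset.mem_filter, Finset.mem_univ, true_and,
    Prod.mk.injEq]
  constructor
  · rintro ⟨j, hj, h1, h2⟩
    obtain ⟨t, ht⟩ := Option.ne_none_iff_exists'.1 hj
    exact ⟨j, h1, by simp_all⟩
  · rintro ⟨j, h1, h2⟩
    exact ⟨j, by simp [h2], h1, by simp [h2]⟩

lemma outUnique_edgesOf (hs : Function.Injective s) (f : W → Option V) :
    OutUnique (edgesOf s f) := by
  intro a b c hb hc
  rw [mem_edgesOf] at hb hc
  obtain ⟨j, rfl, hj⟩ := hb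
  obtain ⟨k, hk, hk'⟩ := hc
  rw [hs hk, hj] at hk'
  exact Option.some.inj hk'

/-- Ordering the sources by rank makes the matrix unitriangular. -/
lemma det_choiceMatrix_of_isRank [DecidableEq W] [CommRing S] {f : W → Option V} {r : V → ℕ}
    (hr : IsRank (edgesOf s f) r) : (choiceMatrix S s f).det = 1 := by
  have hz : ∀ i j, r (s j) ≤ r (s i) → f j ≠ some (s i) := by
    intro i j hij h
    have := hr _ _ (mem_edgesOf.2 ⟨j, rfl, h⟩)
    omega
  have hbt : (choiceMatrix S s f).BlockTriangular (fun j => r (s j)) := by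
    intro i j hij
    have hij' : r (s j) < r (s i) := hij
    have hne : i ≠ j := by rintro rfl; omega
    simp [choiceMatrix, hne, hz i j hij'.le]
  rw [hbt.det]
  refine Finset.prod_eq_one fun a _ => ?_
  have h1 : (choiceMatrix S s f).toSquareBlock (fun j => r (s j)) a = 1 := ?_
  · rw [h1, Matrix.det_one]
  ext i j
  have h := hz i.1 j.1 (by rw [i.2, j.2])
  simp [Matrix.toSquareBlock, Matrix.toSquareBlockProp, choiceMatrix, h, Matrix.one_apply, Subtype.ext_iff]

/-- The columns indexed by a union of directed cycles sum to zero. -/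
lemma det_choiceMatrix_of_isCycleSet [DecidableEq W] [CommRing S] (hs : Function.Injective s) {f : W → Option V} {g : V → V}
    {O : Set V} (h : IsCycleSet (edgesOf s f) g O) : (choiceMatrix S s f).det = 0 := by
  obtain ⟨⟨x, hx⟩, hbij, -, hE⟩ := h
  have hsrc : ∀ v ∈ O, ∃ j, s j = v ∧ f j = some (g v) := fun v hv => mem_edgesOf.1 (hE v hv)
  -- The indicator vector of `O` lies in the kernel, and it has an entry equal to `1`.
  let c : W → S := fun j => if s j ∈ O then 1 else 0
  have hc : (choiceMatrix S s f).mulVec c = 0 := by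
    ext i
    simp only [Matrix.mulVec, dotProduct, choiceMatrix, Matrix.of_apply, sub_mul,
      Finset.sum_sub_distrib, Pi.zero_apply, ite_mul, one_mul, zero_mul, Finset.sum_ite_eq,
      Finset.mem_univ, if_true]
    rw [sub_eq_zero]
    by_cases hi : s i ∈ O
    · obtain ⟨u, hu, hui⟩ := hbij.surjOn hi
      obtain ⟨k, rfl, hk⟩ := hsrc u hu
      rw [Finset.sum_eq_single k]
      · simp [c, hi, hu, hk, hui]
      · intro j _ hjk
        by_cases hj : s j ∈ O
        · rw [if_neg]
          intro hfj
          obtain ⟨j', hj', hfj'⟩ := hsrc _ hj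
          rw [hs hj', hfj, Option.some.injEq] at hfj'
          exact hjk (hs (hbij.injOn hj hu (by rw [← hfj', hui])))
        · simp [c, hj]
      · simp
    · simp only [c, hi, if_false]
      symm
      refine Finset.sum_eq_zero fun j _ => ?_
      by_cases hj : s j ∈ O
      · rw [if_neg]
        intro hfj
        obtain ⟨j', hj', hfj'⟩ := hsrc _ hj
        rw [hs hj', hfj, Option.some.injEq] at hfj'
        exact hi (hfj' ▸ hbij.mapsTo hj)
      · simp [hj]
  obtain ⟨k, hk, -⟩ := hsrc x hx
  have h1 : (choiceMatrix S s f).adjugate.mulVec ((choiceMatrix S s f).mulVec c) = 0 := by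
    rw [hc, Matrix.mulVec_zero]
  rw [Matrix.mulVec_mulVec, Matrix.adjugate_mul, Matrix.smul_mulVec, Matrix.one_mulVec] at h1
  have := congrFun h1 k
  simpa [c, hk, hx] using this

lemma det_choiceMatrix [DecidableEq W] [CommRing S] [Finite V] (hs : Function.Injective s) (f : W → Option V) :
    (choiceMatrix S s f).det = if IsIncomingForest (edgesOf s f) then 1 else 0 := by
  rcases exists_isRank_or_isCycleSet (outUnique_edgesOf hs f) with ⟨r, hr⟩ | ⟨g, O, h⟩
  · rw [if_pos (hr.isIncomingForest (outUnique_edgesOf hs f)), det_choiceMatrix_of_isRank hr]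
  · rw [if_neg h.not_isIncomingForest, det_choiceMatrix_of_isCycleSet hs h]

end Det

/-! ### Multilinear expansion of the characteristic polynomial -/

section Expansion
open Polynomial
variable {W V R : Type*} [Fintype W] {s : W → V}

/-- The coefficient of a choice at `j` in the expansion of column `j`: the indeterminate if no edge
is chosen, and otherwise the label of the chosen edge (`0` if it is not an edge of `E`). -/
noncomputable def choiceWeight [CommRing R] (s : W → V) (E : Finset (V × V)) (w : V × V → R) (j : W) :
    Option V → R[X]
  | none => X
  | some t => if (s j, t) ∈ E then C (w (s j, t)) else 0

/-- A matrix whose columns are the weighted sums of the columns of `choiceMatrix` over all choices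
is expanded by multilinearity of the determinant in the columns. -/
lemma det_eq_sum_choices [DecidableEq W] [Fintype V] [CommRing R] (hs : Function.Injective s) (E : Finset (V × V)) (w : V × V → R)
    (L : Matrix W W R[X])
    (hL : ∀ i j, L i j = ∑ o : Option V, choiceWeight s E w j o *
      ((if i = j then 1 else 0) - (if o = some (s i) then 1 else 0))) :
    L.det = ∑ f : W → Option V, if IsIncomingForest (edgesOf s f) then
      ∏ j, choiceWeight s E w j (f j) else 0 := by
  have hrow : L.transpose = fun j => ∑ o : Option V, choiceWeight s E w j o •
      fun i => ((if i = j then 1 else 0) - (if o = some (s i) then 1 else 0) : R[X]) := by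
    funext j i
    rw [Matrix.transpose_apply, hL]
    simp
  rw [← Matrix.det_transpose, hrow]
  have := (Matrix.detRowAlternating (n := W) (R := R[X])).toMultilinearMap.map_sum
    (fun j (o : Option V) => choiceWeight s E w j o •
      fun i => ((if i = j then 1 else 0) - (if o = some (s i) then 1 else 0) : R[X]))
  refine this.trans (Finset.sum_congr rfl fun f _ => ?_)
  rw [MultilinearMap.map_smul_univ]
  have h2 := det_choiceMatrix (S := R[X]) hs f
  rw [← Matrix.det_transpose] at h2
  have h3 : (Matrix.detRowAlternating (n := W) (R := R[X])).toMultilinearMap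
      (fun j i => ((if i = j then 1 else 0) - (if f j = some (s i) then 1 else 0) : R[X]))
      = (choiceMatrix R[X] s f).transpose.det := rfl
  rw [h3, h2]
  split_ifs <;> simp

lemma card_edgesOf (hs : Function.Injective s) (f : W → Option V) :
    (edgesOf s f).card = (Finset.univ.filter fun j => f j ≠ none).card :=
  Finset.card_image_of_injective _ fun _ _ h => hs (Prod.ext_iff.1 h).1

lemma edgesOf_injective (hs : Function.Injective s) : Function.Injective (edgesOf s) := by
  intro f f' h
  ext j t
  have : ∀ f : W → Option V, f j = some t ↔ (s j, t) ∈ edgesOf s f := by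
    intro f
    rw [mem_edgesOf]
    refine ⟨fun h => ⟨j, rfl, h⟩, ?_⟩
    rintro ⟨k, hk, h⟩
    rwa [hs hk] at h
  simp only [this, h]

lemma prod_choiceWeight [CommRing R] (hs : Function.Injective s) (E : Finset (V × V)) (w : V × V → R)
    (f : W → Option V) :
    ∏ j, choiceWeight s E w j (f j) = if edgesOf s f ⊆ E then
      C (∏ e ∈ edgesOf s f, w e) * X ^ (Fintype.card W - (edgesOf s f).card) else 0 := by
  split_ifs with h
  · rw [← Finset.prod_filter_mul_prod_filter_not Finset.univ (fun j => f j ≠ none)]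
    congr 1
    · rw [edgesOf, Finset.prod_image fun _ _ _ _ h => hs (Prod.ext_iff.1 h).1, map_prod]
      refine Finset.prod_congr rfl fun j hj => ?_
      obtain ⟨t, ht⟩ := Option.ne_none_iff_exists'.1 (Finset.mem_filter.1 hj).2
      have : (s j, t) ∈ E := h (mem_edgesOf.2 ⟨j, rfl, ht⟩)
      simp [ht, choiceWeight, this]
    · rw [card_edgesOf hs, Finset.prod_congr rfl (g := fun _ => (X : R[X])), Finset.prod_const]
      · congr 1
        have := Finset.card_filter_add_card_filter_not (s := (Finset.univ : Finset W))
          (fun j => f j ≠ none)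
        rw [Finset.card_univ] at this
        omega
      · intro j hj
        have : f j = none := by simpa using hj
        simp [this, choiceWeight]
  · rw [Finset.not_subset] at h
    obtain ⟨⟨a, b⟩, hab, hE⟩ := h
    obtain ⟨j, rfl, hj⟩ := mem_edgesOf.1 hab
    refine Finset.prod_eq_zero (Finset.mem_univ j) ?_
    simp [hj, choiceWeight, hE]

lemma exists_edgesOf_eq {F : Finset (V × V)} (hF : OutUnique F)
    (hsrc : ∀ e ∈ F, ∃ j, s j = e.1) : ∃ f, edgesOf s f = F := by
  refine ⟨fun j => if h : ∃ t, (s j, t) ∈ F then some h.choose else none, ?_⟩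
  ext ⟨a, b⟩
  rw [mem_edgesOf]
  constructor
  · rintro ⟨j, rfl, hj⟩
    split_ifs at hj with h
    rw [← Option.some.inj hj]
    exact h.choose_spec
  · intro hab
    obtain ⟨j, hj⟩ := hsrc _ hab
    simp only at hj
    subst hj
    have h : ∃ t, (s j, t) ∈ F := ⟨b, hab⟩
    refine ⟨j, rfl, ?_⟩
    rw [dif_pos h, hF _ _ _ h.choose_spec hab]

/-- The forest expansion for a finite directed graph `E` all of whose edges start in the range
of `s`. The matrix `L` is `X • I - A`, where `A` is the compartmental matrix on the sources;
vertices outside the range of `s` are sinks. -/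
theorem coeff_det_eq_forestSum [DecidableEq W] [Fintype V] [CommRing R] (hs : Function.Injective s) (E : Finset (V × V))
    (hE : ∀ e ∈ E, ∃ j, s j = e.1) (w : V × V → R) (L : Matrix W W R[X])
    (hL : ∀ i j, L i j = ∑ o : Option V, choiceWeight s E w j o *
      ((if i = j then 1 else 0) - (if o = some (s i) then 1 else 0)))
    [DecidableEq V] {i : ℕ} (hi : i ≤ Fintype.card W) :
    L.det.coeff i = forestSum E w (Fintype.card W - i) := by
  rw [det_eq_sum_choices hs E w L hL, finsetSum_coeff, forestSum]
  have hle : ∀ f : W → Option V, (edgesOf s f).card ≤ Fintype.card W := fun f => by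
    rw [card_edgesOf hs]; exact Finset.card_le_univ _
  symm
  rw [← Finset.sum_filter_add_sum_filter_not Finset.univ (fun f : W → Option V =>
    edgesOf s f ∈ E.powerset.filter
      (fun F => F.card = Fintype.card W - i ∧ IsIncomingForest F))]
  rw [Finset.sum_eq_zero (s := Finset.univ.filter fun f : W → Option V => ¬ _), add_zero]
  · symm
    refine Finset.sum_bij (fun f _ => edgesOf s f) ?_ ?_ ?_ ?_
    · intro f hf
      exact (Finset.mem_filter.1 hf).2
    · intro f _ f' _ h
      exact edgesOf_injective hs h
    · intro F hF
      have hF' := hF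
      rw [Finset.mem_filter, Finset.mem_powerset] at hF
      obtain ⟨f, rfl⟩ := exists_edgesOf_eq (s := s) (F := F)
        (fun a b c hb hc => (Prod.ext_iff.1 (hF.2.2.2.2.2 _ hb _ hc rfl)).2)
        (fun e he => hE e (hF.1 he))
      exact ⟨f, by simpa using hF', rfl⟩
    · intro f hf
      have hf := (Finset.mem_filter.1 hf).2
      rw [Finset.mem_filter, Finset.mem_powerset] at hf
      rw [if_pos hf.2.2, prod_choiceWeight hs, if_pos hf.1, coeff_C_mul_X_pow, if_pos]
      omega
  · intro f hf
    have hf := (Finset.mem_filter.1 hf).2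
    rw [Finset.mem_filter, Finset.mem_powerset] at hf
    split_ifs with h1
    · rw [prod_choiceWeight hs]
      split_ifs with h2
      · rw [coeff_C_mul_X_pow, if_neg]
        intro h3
        have := hle f
        exact hf ⟨h2, by omega, h1⟩
      · simp
    · simp

end Expansion


/-- Writing `det (λ I - A₁₁) = λ^{n-1} + d_{n-2} λ^{n-2} + ⋯ + d_0`,
where `A₁₁` is the compartmental matrix with row 1 and column 1 deleted, each coefficient
`d_i` (for `i ≤ n - 2`) equals the sum over all spanning incoming forests of `G̃₁` with
exactly `n - i - 1` edges of the products of the edge labels. -/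
theorem deleteFirst_charpoly_coeff_eq_forestSum {R : Type*} [CommRing R] {n : ℕ}
    (hn : 2 ≤ n) (M : LinCompModel (Fin n) R) (i : ℕ) (hi : i ≤ n - 2) :
    ((compMatrix M).submatrix
        (fun k : Fin (n-1) => (⟨k.val + 1, by have := k.isLt; omega⟩ : Fin n))
        (fun k : Fin (n-1) => (⟨k.val + 1, by have := k.isLt; omega⟩ : Fin n))).charpoly.coeff i
      = forestSum (aug1Edges (by omega) M) (aug1Label (by omega) M) (n - i - 1) := by
  have hn0 : 0 < n := by omega
  have hs : Function.Injective (fun k : Fin (n-1) =>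
      (some (⟨k.val + 1, by have := k.isLt; omega⟩ : Fin n))) := by
    intro a b h
    simp only [Option.some.injEq, Fin.mk.injEq] at h
    exact Fin.ext (by omega)
  have hE : ∀ e ∈ aug1Edges hn0 M, ∃ k : Fin (n-1),
      some (⟨k.val + 1, by have := k.isLt; omega⟩ : Fin n) = e.1 := by
    have hk : ∀ j : Fin n, j ≠ ⟨0, hn0⟩ → ∃ k : Fin (n-1),
        some (⟨k.val + 1, by have := k.isLt; omega⟩ : Fin n) = some j := by
      intro j hj
      have hj0 : j.val ≠ 0 := fun h => hj (Fin.ext h)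
      exact ⟨⟨j.val - 1, by omega⟩, by simp only [Option.some.injEq, Fin.ext_iff]; omega⟩
    intro e he
    simp only [aug1Edges, Finset.mem_union, Finset.mem_image, Finset.mem_filter] at he
    rcases he with ⟨e', ⟨-, h, -⟩, rfl⟩ | ⟨j, ⟨-, h, -⟩, rfl⟩
    · exact hk _ h
    · exact hk _ h
  have := coeff_det_eq_forestSum hs (aug1Edges hn0 M) hE (aug1Label hn0 M)
    ((compMatrix M).submatrix
        (fun k : Fin (n-1) => (⟨k.val + 1, by have := k.isLt; omega⟩ : Fin n))
        (fun k : Fin (n-1) => (⟨k.val + 1, by have := k.isLt; omega⟩ : Fin n))).charmatrix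
    ?_ (i := i) (by rw [Fintype.card_fin]; omega)
  · rw [Fintype.card_fin, show n - 1 - i = n - i - 1 by omega] at this
    exact this
  -- It remains to check, entry by entry, that column `l` of the characteristic matrix is the
  -- weighted sum of the columns attached to the possible choices at compartment `l + 1`.
  intro k l
  generalize hp : (⟨k.val + 1, by have := k.isLt; omega⟩ : Fin n) = p
  generalize hq : (⟨l.val + 1, by have := l.isLt; omega⟩ : Fin n) = q
  have hkl : k = l ↔ p = q := by
    rw [← hp, ← hq]
    simp [Fin.ext_iff]
  have hp0 : p ≠ ⟨0, hn0⟩ := by rw [← hp]; simp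
  have hq0 : q ≠ ⟨0, hn0⟩ := by rw [← hq]; simp
  have hmem : ∀ t : Option (Fin n), (some q, t) ∈ aug1Edges hn0 M ↔
      (∃ i, t = some i ∧ i ≠ ⟨0, hn0⟩ ∧ (q, i) ∈ M.edges) ∨
      (t = none ∧ (q ∈ M.leak ∨ (q, (⟨0, hn0⟩ : Fin n)) ∈ M.edges)) := by
    intro t
    simp only [aug1Edges, Finset.mem_union, Finset.mem_image, Finset.mem_filter, Finset.mem_univ,
      true_and, Prod.mk.injEq, Option.some.injEq, Prod.exists]
    constructor
    · rintro (⟨a, b, ⟨h, -, hb⟩, rfl, rfl⟩ | ⟨j, ⟨-, h⟩, rfl, rfl⟩)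
      · exact Or.inl ⟨b, rfl, hb, h⟩
      · exact Or.inr ⟨rfl, h⟩
    · rintro (⟨b, rfl, hb, h⟩ | ⟨rfl, h⟩)
      · exact Or.inl ⟨q, b, ⟨h, hq0, hb⟩, rfl, rfl⟩
      · exact Or.inr ⟨q, ⟨hq0, h⟩, rfl, rfl⟩
  have hwsome : ∀ i : Fin n, (if (some q, some i) ∈ aug1Edges hn0 M then
      Polynomial.C (aug1Label hn0 M (some q, some i)) else 0) =
      if i = ⟨0, hn0⟩ then 0 else
        Polynomial.C (if (q, i) ∈ M.edges then M.label (q, i) else 0) := by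
    intro i
    by_cases h0 : i = ⟨0, hn0⟩ <;> by_cases h1 : (q, i) ∈ M.edges <;>
      simp [hmem, h0, h1, aug1Label]
  have hwnone : (if (some q, none) ∈ aug1Edges hn0 M then
      Polynomial.C (aug1Label hn0 M (some q, none)) else 0) =
      Polynomial.C (if q ∈ M.leak then M.leakLabel q else 0) +
        Polynomial.C (if (q, (⟨0, hn0⟩ : Fin n)) ∈ M.edges then
          M.label (q, ⟨0, hn0⟩) else 0) := by
    by_cases h0 : q ∈ M.leak <;> by_cases h1 : (q, (⟨0, hn0⟩ : Fin n)) ∈ M.edges <;>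
      simp [hmem, h0, h1, aug1Label]
  have hloop : (q, q) ∉ M.edges := fun h => M.no_loops _ h rfl
  have hsum : ∑ e ∈ M.edges.filter (fun e => e.1 = q), M.label e =
      ∑ i, if (q, i) ∈ M.edges then M.label (q, i) else 0 := by
    rw [← Finset.sum_filter]
    symm
    refine Finset.sum_bij (fun i _ => (q, i)) ?_ ?_ ?_ ?_
    · intro i hi
      simpa using hi
    · intro a _ b _ h
      exact (Prod.ext_iff.1 h).2
    · rintro ⟨a, b⟩ h
      simp only [Finset.mem_filter] at h
      obtain ⟨h, rfl⟩ := h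
      exact ⟨b, by simpa using h, rfl⟩
    · intros
      rfl
  rw [Matrix.charmatrix_apply, Matrix.submatrix_apply, Fintype.sum_option, Fintype.sum_option]
  simp only [choiceWeight, hp, hq, hwsome, hwnone]
  by_cases h : p = q
  -- On the diagonal, the term `a_{1j}` of `A_{jj}` is the one absorbed into the label of `j → 0`.
  · have hkl' := hkl.2 h
    subst hkl'
    subst h
    rw [Finset.sum_congr rfl (g := fun i => if i = ⟨0, hn0⟩ then 0 else
        Polynomial.C (if (p, i) ∈ M.edges then M.label (p, i) else 0))]
    · have hsplit := Finset.sum_erase_add Finset.univ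
        (fun i => Polynomial.C (if (p, i) ∈ M.edges then M.label (p, i) else 0))
        (Finset.mem_univ (⟨0, hn0⟩ : Fin n))
      have herase : ∑ i, (if i = ⟨0, hn0⟩ then 0 else
          Polynomial.C (if (p, i) ∈ M.edges then M.label (p, i) else 0)) =
          ∑ i ∈ Finset.univ.erase (⟨0, hn0⟩ : Fin n),
            Polynomial.C (if (p, i) ∈ M.edges then M.label (p, i) else 0) := by
        rw [← Finset.filter_ne', Finset.sum_filter]
        refine Finset.sum_congr rfl fun i _ => ?_
        by_cases hi : i = ⟨0, hn0⟩ <;> simp [hi]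
      rw [herase]
      simp only [compMatrix, Matrix.of_apply, if_true, hsum, Matrix.diagonal_apply_eq, map_sub,
        map_neg, map_sum, Option.some.injEq, reduceCtorEq, if_false]
      rw [← hsplit]
      ring
    · intro i _
      by_cases hi : some i = some p
      · have hi' := Option.some.inj hi
        subst hi'
        simp [hloop]
      · have hi' : i ≠ p := fun h => hi (by rw [h])
        simp [hi']
  · have hkl' : k ≠ l := fun h' => h (hkl.1 h')
    rw [Finset.sum_eq_single p]
    · simp [compMatrix, h, hkl', hp0]
    · intro i _ hi
      simp [hi, hkl']
    · simp
end

section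
/- Let G be a directed graph on n vertices whose edge i→j is labeled b_{ji} (labels in a commutative ring), and let L be either the Laplacian matrix of G or its transpose. Write det(λI + L) = λ^n + e_{n−1}λ^{n−1} + ⋯ + e_0. Then for each i = 0, 1, …, n−1, e_i = Σ_{F ∈ 𝓕_{n−i}(G)} π_F, the sum being over all spanning incoming forests of G with exactly n−i edges. -/
/-!
The rows of `X • 1 + L` are `X • eᵢ + ∑ⱼ aᵢⱼ • (eᵢ - eⱼ)`, where `aᵢⱼ` is the label of the edge `i → j`
(zero if there is none).  Expanding the determinant multilinearly in the rows gives a sum over partial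
functions `g : V → Option V`: the vertices with `g i = none` contribute a factor `X`, the others a factor
`aᵢⱼ` with `g i = some j`, and what remains is the determinant of the matrix with rows `eᵢ` or `eᵢ - eⱼ`.

This last determinant is `1` if iterating `g` always terminates, since the matrix is then block
unitriangular for the rank function of the well-founded relation `g u = some v` (`det_succMatrix_of_wf`),
and `0` otherwise, since the indicator function of the set of vertices from which `g` does not terminate
lies in the kernel (`det_succMatrix_of_not_wf`).

Partial functions correspond to edge sets with out-degrees at most one via `g ↦ succEdges g`, and `g` always
terminates exactly when `succEdges g` is an incoming forest (`isIncomingForest_succEdges`).  Indeed both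
neighbours on an undirected cycle of a vertex of largest rank would be the successor of that vertex;
conversely, if there are no loops or 2-cycles, following a nonterminating `g` gives arbitrarily long
walks without backtracking, which are paths in an acyclic graph, contradicting finiteness.
-/

open scoped Classical

/-- The Laplacian matrix of a labelled directed graph with edge set `E` and labels `w`
(the label of the edge `i → j` is `b_{ji} = w (i, j)`). -/
noncomputable def digraphLaplacian {V R : Type*} [Fintype V] [DecidableEq V] [CommRing R]
    (E : Finset (V × V)) (w : V × V → R) : Matrix V V R :=
  Matrix.of fun i j =>
    if i = j then ∑ e ∈ E.filter (fun e => e.1 = i ∧ e.2 ≠ i), w e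
    else -(if (i, j) ∈ E then w (i, j) else 0)

/-- The relation "`v` is the successor of `u`" of a partial function `g`. It is well-founded exactly
when iterating `g` terminates from every vertex. -/
def SuccRel {V : Type*} (g : V → Option V) (v u : V) : Prop := g u = some v

/-- The set of edges `u → v` with `g u = some v`. -/
noncomputable def succEdges {V : Type*} [Fintype V] [DecidableEq V] (g : V → Option V) :
    Finset (V × V) :=
  Finset.univ.filter fun e => g e.1 = some e.2

lemma mem_succEdges {V : Type*} [Fintype V] [DecidableEq V] (g : V → Option V) (u v : V) :
    (u, v) ∈ succEdges g ↔ g u = some v := by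
  simp [succEdges]

/-- The matrix whose `i`-th row is `eᵢ - eⱼ` if `g i = some j`, and `eᵢ` if `g i = none`. -/
def succMatrix {V : Type*} [DecidableEq V] (S : Type*) [CommRing S] (g : V → Option V) :
    Matrix V V S :=
  Matrix.of fun i j => (if i = j then 1 else 0) - (if g i = some j then 1 else 0)

/-! ### Termination of a partial function -/

lemma SuccRel.exists_of_not_acc {V : Type*} {g : V → Option V} {u : V}
    (h : ¬ Acc (SuccRel g) u) : ∃ v, g u = some v ∧ ¬ Acc (SuccRel g) v := by
  by_contra! H
  exact h ⟨_, fun v hv => H v hv⟩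

lemma SuccRel.acc_iff {V : Type*} {g : V → Option V} {u v : V} (h : g u = some v) :
    Acc (SuccRel g) u ↔ Acc (SuccRel g) v := by
  refine ⟨fun hu => hu.inv h, fun hv => ⟨_, fun w hw => ?_⟩⟩
  have : v = w := Option.some.inj (h.symm.trans hw)
  exact this ▸ hv

lemma SuccRel.exists_not_acc {V : Type*} {g : V → Option V} (h : ¬ WellFounded (SuccRel g)) :
    ∃ u, ¬ Acc (SuccRel g) u := by
  by_contra! H
  exact h ⟨H⟩

/-! ### The determinant attached to a partial function -/

/-- The matrix is block unitriangular with respect to the rank, because successors have smaller rank. -/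
lemma det_succMatrix_of_wf {V S : Type*} [Fintype V] [DecidableEq V] [CommRing S]
    {g : V → Option V} (h : WellFounded (SuccRel g)) : (succMatrix S g).det = 1 := by
  have : IsWellFounded V (SuccRel g) := ⟨h⟩
  have ht : Matrix.BlockTriangular (succMatrix S g).transpose (IsWellFounded.rank (SuccRel g)) := by
    intro i j hij
    have h1 : j ≠ i := by rintro rfl; exact lt_irrefl _ hij
    have h2 : g j ≠ some i := fun e => lt_asymm hij (IsWellFounded.rank_lt_of_rel (r := SuccRel g) e)
    simp [succMatrix, h1, h2]
  rw [← Matrix.det_transpose, ht.det]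
  refine Finset.prod_eq_one fun a _ => ?_
  suffices h1 : (succMatrix S g).transpose.toSquareBlock (IsWellFounded.rank (SuccRel g)) a = 1 by
    rw [h1, Matrix.det_one]
  ext ⟨i, hi⟩ ⟨j, hj⟩
  have h2 : g j ≠ some i := fun e =>
    absurd (IsWellFounded.rank_lt_of_rel (r := SuccRel g) e) (by rw [hi, hj]; exact lt_irrefl _)
  simp [succMatrix, Matrix.toSquareBlock_def, Matrix.one_apply, h2, eq_comm]

/-- The indicator function of the nonterminating vertices is in the kernel. -/
lemma det_succMatrix_of_not_wf {V S : Type*} [Fintype V] [DecidableEq V] [CommRing S]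
    {g : V → Option V} (h : ¬ WellFounded (SuccRel g)) : (succMatrix S g).det = 0 := by
  -- A nonzero kernel vector forces the determinant to vanish only over a domain, hence the
  -- detour through `ℤ`.
  have hZ : (succMatrix ℤ g).det = 0 := by
    obtain ⟨c, hc⟩ := SuccRel.exists_not_acc h
    refine Matrix.exists_mulVec_eq_zero_iff.1
      ⟨fun u => if Acc (SuccRel g) u then 0 else 1, fun H => ?_, ?_⟩
    · simpa [hc] using congrFun H c
    · ext u
      simp only [Matrix.mulVec, dotProduct, succMatrix, Matrix.of_apply, sub_mul, ite_mul, one_mul,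
        zero_mul, Finset.sum_sub_distrib, Finset.sum_ite_eq, Finset.mem_univ, if_true, Pi.zero_apply]
      rcases hu : g u with _ | v
      · have : Acc (SuccRel g) u := ⟨_, fun v hv => by simp [SuccRel, hu] at hv⟩
        simp [this]
      · simp [SuccRel.acc_iff hu]
  have hmap : succMatrix S g = (succMatrix ℤ g).map (Int.castRingHom S) := by
    ext i j
    simp only [succMatrix, Matrix.map_apply, Matrix.of_apply]
    split_ifs <;> simp
  rw [hmap, ← RingHom.mapMatrix_apply, ← RingHom.map_det, hZ, map_zero]

/-! ### Forests as terminating partial functions -/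

lemma wf_of_isIncomingForest {V : Type*} [Fintype V] [DecidableEq V] {g : V → Option V}
    (h : IsIncomingForest (succEdges g)) : WellFounded (SuccRel g) := by
  obtain ⟨h1, h2, h3, -⟩ := h
  by_contra hwf
  obtain ⟨c, hc⟩ := SuccRel.exists_not_acc hwf
  choose s hs hs' using fun u : V => SuccRel.exists_of_not_acc (g := g) (u := u)
  have loop : ∀ u v, g u = some v → u ≠ v := fun u v e => h1 (u, v) ((mem_succEdges g u v).2 e)
  have two : ∀ u v, g u = some v → g v ≠ some u := fun u v e e2 =>
    h2 (u, v) ((mem_succEdges g u v).2 e) ((mem_succEdges g v u).2 e2)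
  -- The condition on the first edge makes the absence of backtracking inductive.
  have key : ∀ n : ℕ, ∀ u (hu : ¬ Acc (SuccRel g) u),
      ∃ (v : V) (p : (SimpleGraph.fromRel fun u v => (u, v) ∈ succEdges g).Walk u v),
        p.length = n ∧ p.edges.IsChain (· ≠ ·) ∧ ∀ e ∈ p.edges.head?, e = s(u, s u hu) := by
    intro n
    induction n with
    | zero => exact fun u hu => ⟨u, .nil, by simp⟩
    | succ n ih =>
      intro u hu
      obtain ⟨v, p, hl, hch, hd⟩ := ih (s u hu) (hs' u hu)
      have hadj : (SimpleGraph.fromRel fun u v => (u, v) ∈ succEdges g).Adj u (s u hu) := by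
        rw [SimpleGraph.fromRel_adj]
        exact ⟨loop _ _ (hs u hu), Or.inl ((mem_succEdges _ _ _).2 (hs u hu))⟩
      refine ⟨v, .cons hadj p, by simp [hl], ?_, by simp⟩
      rw [SimpleGraph.Walk.edges_cons, List.isChain_cons]
      refine ⟨fun e he heq => ?_, hch⟩
      rw [← heq] at he
      have := hd _ he
      rw [Sym2.eq_iff] at this
      rcases this with ⟨e1, -⟩ | ⟨e1, -⟩
      · exact loop _ _ (hs u hu) e1
      · have hss := hs _ (hs' u hu)
        rw [← e1] at hss
        exact two _ _ (hs u hu) hss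
  obtain ⟨v, p, hl, hch, -⟩ := key (Fintype.card V) c hc
  have := ((h3.isPath_iff_isChain p).2 hch).length_lt
  omega

lemma isIncomingForest_of_wf {V : Type*} [Fintype V] [DecidableEq V] {g : V → Option V}
    (h : WellFounded (SuccRel g)) : IsIncomingForest (succEdges g) := by
  have : IsWellFounded V (SuccRel g) := ⟨h⟩
  have hlt : ∀ u v, g u = some v →
      IsWellFounded.rank (SuccRel g) v < IsWellFounded.rank (SuccRel g) u :=
    fun u v e => IsWellFounded.rank_lt_of_rel (r := SuccRel g) e
  refine ⟨?_, ?_, ?_, ?_⟩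
  · rintro ⟨u, v⟩ he (rfl : u = v)
    exact lt_irrefl _ (hlt _ _ ((mem_succEdges _ _ _).1 he))
  · rintro ⟨u, v⟩ he he'
    exact lt_asymm (hlt _ _ ((mem_succEdges _ _ _).1 he)) (hlt _ _ ((mem_succEdges _ _ _).1 he'))
  · intro w p hp
    obtain ⟨v, hv, hmax⟩ := p.support.toFinset.exists_max_image
      (IsWellFounded.rank (SuccRel g)) ⟨w, by simp⟩
    rw [List.mem_toFinset] at hv
    have hq := hp.rotate hv
    have hsucc : ∀ x ∈ (p.rotate v hv).support,
        (SimpleGraph.fromRel fun u v => (u, v) ∈ succEdges g).Adj v x → g v = some x := by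
      intro x hx hadj
      rw [SimpleGraph.Walk.mem_support_rotate_iff] at hx
      rw [SimpleGraph.fromRel_adj, mem_succEdges, mem_succEdges] at hadj
      rcases hadj.2 with e | e
      · exact e
      · exact absurd (hlt _ _ e) (not_lt.2 (hmax x (List.mem_toFinset.2 hx)))
    have e1 := hsucc _ (SimpleGraph.Walk.getVert_mem_support _ _)
      (SimpleGraph.Walk.adj_snd hq.not_nil)
    have e2 := hsucc _ (SimpleGraph.Walk.getVert_mem_support _ _)
      (SimpleGraph.Walk.adj_penultimate hq.not_nil).symm
    exact hq.snd_ne_penultimate (Option.some.inj (e1.symm.trans e2))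
  · rintro ⟨u, v⟩ he ⟨u', v'⟩ he' (rfl : u = u')
    rw [mem_succEdges] at he he'
    rw [Option.some.inj (he.symm.trans he')]

lemma isIncomingForest_succEdges {V : Type*} [Fintype V] [DecidableEq V] (g : V → Option V) :
    IsIncomingForest (succEdges g) ↔ WellFounded (SuccRel g) :=
  ⟨wf_of_isIncomingForest, isIncomingForest_of_wf⟩

lemma succEdges_injective {V : Type*} [Fintype V] [DecidableEq V] :
    Function.Injective (succEdges (V := V)) := by
  intro g g' h
  ext u v
  rw [← mem_succEdges g, h, mem_succEdges]

lemma exists_succEdges_eq {V : Type*} [Fintype V] [DecidableEq V] {F : Finset (V × V)}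
    (hF : IsIncomingForest F) : ∃ g, succEdges g = F := by
  refine ⟨fun u => if h : ∃ v, (u, v) ∈ F then some h.choose else none, ?_⟩
  ext ⟨u, v⟩
  rw [mem_succEdges]
  constructor
  · intro h
    split_ifs at h with h'
    exact Option.some.inj h ▸ h'.choose_spec
  · intro h
    have h' : ∃ v, (u, v) ∈ F := ⟨v, h⟩
    rw [dif_pos h']
    exact congrArg some (Prod.ext_iff.1 (hF.2.2.2 _ h'.choose_spec _ h rfl)).2

lemma prod_succEdges {V S : Type*} [Fintype V] [DecidableEq V] [CommMonoid S] (g : V → Option V)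
    (f : V × V → S) : ∏ e ∈ succEdges g, f e = ∏ i, (g i).elim 1 fun j => f (i, j) := by
  rw [succEdges, Finset.prod_filter, Fintype.prod_prod_type]
  refine Finset.prod_congr rfl fun i _ => ?_
  rcases h : g i with _ | j <;> simp [h]

lemma card_none_add_card_succEdges {V : Type*} [Fintype V] [DecidableEq V] (g : V → Option V) :
    (Finset.univ.filter fun i => g i = none).card + (succEdges g).card = Fintype.card V := by
  have h : (succEdges g).card = (Finset.univ.filter fun i => ¬ g i = none).card := by
    refine Finset.card_bij (fun e _ => e.1) ?_ ?_ ?_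
    · rintro ⟨u, v⟩ h
      simp [(mem_succEdges _ _ _).1 h]
    · rintro ⟨u, v⟩ h ⟨u', v'⟩ h' (rfl : u = u')
      rw [mem_succEdges] at h h'
      rw [Option.some.inj (h.symm.trans h')]
    · intro u hu
      obtain ⟨v, hv⟩ := Option.ne_none_iff_exists'.1 (Finset.mem_filter.1 hu).2
      exact ⟨(u, v), (mem_succEdges _ _ _).2 hv, rfl⟩
  rw [h, Finset.card_filter_add_card_filter_not, Finset.card_univ]

/-! ### Expansion of the characteristic polynomial -/

open Polynomial in
/-- Multilinear expansion of `det (X • 1 + L)`, where `L` is the Laplacian of the complete digraph with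
labels `a`. -/
lemma det_expansion {V R : Type*} [Fintype V] [DecidableEq V] [CommRing R] (a : V × V → R) :
    (Matrix.of fun i j : V => (∑ o : Option V, o.elim X (fun k => C (a (i, k))) *
      ((if i = j then 1 else 0) - (if o = some j then 1 else 0)) : R[X])).det =
    ∑ g : V → Option V, if WellFounded (SuccRel g) then
      X ^ (Finset.univ.filter fun i => g i = none).card * C (∏ e ∈ succEdges g, a e) else 0 := by
  have h0 : (Matrix.of fun i j : V => (∑ o : Option V, o.elim X (fun k => C (a (i, k))) *
      ((if i = j then 1 else 0) - (if o = some j then 1 else 0)) : R[X])) =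
      fun i => ∑ o : Option V, (o.elim X (fun k => C (a (i, k))) : R[X]) •
        (fun j => ((if i = j then 1 else 0) - (if o = some j then 1 else 0) : R[X])) := by
    ext i j : 2
    simp [Finset.sum_apply]
  rw [h0]
  change (Matrix.detRowAlternating (R := R[X]) (n := V)).toMultilinearMap _ = _
  rw [MultilinearMap.map_sum]
  refine Finset.sum_congr rfl fun g _ => ?_
  rw [MultilinearMap.map_smul_univ]
  change _ • (succMatrix R[X] g).det = _
  split_ifs with h
  · rw [det_succMatrix_of_wf h, smul_eq_mul, mul_one, map_prod, prod_succEdges, Finset.card_filter,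
      ← Finset.prod_pow_eq_pow_sum, ← Finset.prod_mul_distrib]
    refine Finset.prod_congr rfl fun i _ => ?_
    rcases g i with _ | j <;> simp
  · rw [det_succMatrix_of_not_wf h, smul_zero]

open Polynomial in
lemma charpoly_neg_digraphLaplacian {V R : Type*} [Fintype V] [DecidableEq V] [CommRing R]
    (E : Finset (V × V)) (w : V × V → R) (hE : ∀ e ∈ E, e.1 ≠ e.2) :
    (-(digraphLaplacian E w)).charpoly =
    ∑ g : V → Option V, if WellFounded (SuccRel g) then
      X ^ (Finset.univ.filter fun i => g i = none).card *
        C (∏ e ∈ succEdges g, if e ∈ E then w e else 0) else 0 := by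
  rw [← det_expansion, Matrix.charpoly]
  congr 1
  ext i j : 2
  have hdiag : ∑ e ∈ E.filter (fun e => e.1 = i ∧ e.2 ≠ i), w e =
      ∑ k, if (i, k) ∈ E then w (i, k) else 0 := by
    rw [← Finset.sum_filter]
    refine (Finset.sum_bij (fun k _ => (i, k)) ?_ ?_ ?_ ?_).symm
    · intro k hk
      have hk' := (Finset.mem_filter.1 hk).2
      exact Finset.mem_filter.2 ⟨hk', rfl, (hE _ hk').symm⟩
    · intro k _ k' _ h
      exact (Prod.ext_iff.1 h).2
    · rintro ⟨u, v⟩ h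
      obtain rfl : u = i := (Finset.mem_filter.1 h).2.1
      exact ⟨v, Finset.mem_filter.2 ⟨Finset.mem_univ _, (Finset.mem_filter.1 h).1⟩, rfl⟩
    · intros; rfl
  rw [Matrix.charmatrix_apply, Matrix.of_apply, Fintype.sum_option]
  by_cases hij : i = j
  · subst hij
    have hii : (i, i) ∉ E := fun h => hE _ h rfl
    simp [digraphLaplacian, hdiag, mul_sub, Finset.sum_sub_distrib, hii]
  · simp [digraphLaplacian, hij]

lemma forestSum_eq_sum_univ {V R : Type*} [Fintype V] [DecidableEq V] [CommRing R]
    (E : Finset (V × V)) (w : V × V → R) (k : ℕ) :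
    forestSum E w k = ∑ F : Finset (V × V), if F.card = k ∧ IsIncomingForest F then
      ∏ e ∈ F, (if e ∈ E then w e else 0) else 0 := by
  rw [forestSum, Finset.sum_filter, ← Finset.sum_subset (Finset.subset_univ E.powerset)]
  · refine Finset.sum_congr rfl fun F hF => ?_
    have : ∏ e ∈ F, (if e ∈ E then w e else 0) = ∏ e ∈ F, w e :=
      Finset.prod_congr rfl fun e he => if_pos (Finset.mem_powerset.1 hF he)
    rw [this]
  · intro F _ hF
    rw [Finset.mem_powerset, Finset.not_subset] at hF
    obtain ⟨e, he, heE⟩ := hF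
    rw [Finset.prod_eq_zero he (if_neg heE), ite_self]

lemma coeff_charpoly_neg_digraphLaplacian {V R : Type*} [Fintype V] [DecidableEq V] [CommRing R]
    (E : Finset (V × V)) (w : V × V → R) (hE : ∀ e ∈ E, e.1 ≠ e.2) {i : ℕ}
    (hi : i ≤ Fintype.card V) :
    (-(digraphLaplacian E w)).charpoly.coeff i = forestSum E w (Fintype.card V - i) := by
  rw [charpoly_neg_digraphLaplacian E w hE, Polynomial.finsetSum_coeff, forestSum_eq_sum_univ]
  rw [← Finset.sum_subset (Finset.subset_univ (Finset.univ.image (succEdges (V := V)))),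
    Finset.sum_image fun _ _ _ _ h => succEdges_injective h]
  · refine Finset.sum_congr rfl fun g _ => ?_
    have hcard := card_none_add_card_succEdges g
    have hiff : (succEdges g).card = Fintype.card V - i ↔
        i = (Finset.univ.filter fun i => g i = none).card := by omega
    simp only [isIncomingForest_succEdges, hiff]
    by_cases h : WellFounded (SuccRel g)
    · simp only [h, if_true, and_true, Polynomial.coeff_mul_C, Polynomial.coeff_X_pow, ite_mul,
        one_mul, zero_mul]
    · simp [h]
  · intro F _ hF
    refine if_neg fun h => hF ?_
    obtain ⟨g, rfl⟩ := exists_succEdges_eq h.2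
    exact Finset.mem_image_of_mem _ (Finset.mem_univ g)

/-- Let `L` be either the Laplacian of a directed graph `G` on `n`
vertices or its transpose, and write `det (λ I + L) = λ^n + e_{n-1} λ^{n-1} + ⋯ + e_0`
(i.e. consider the characteristic polynomial of `-L`). Then
`e_i = Σ_{F ∈ 𝓕_{n-i}(G)} π_F` for each `i < n`. -/
theorem neg_laplacian_charpoly_coeff {R : Type*} [CommRing R] {n : ℕ}
    (E : Finset (Fin n × Fin n)) (w : Fin n × Fin n → R)
    (hE : ∀ e ∈ E, e.1 ≠ e.2) :
    (∀ i < n, (-(digraphLaplacian E w)).charpoly.coeff i = forestSum E w (n - i)) ∧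
      (∀ i < n, (-(digraphLaplacian E w).transpose).charpoly.coeff i = forestSum E w (n - i)) := by
  have h : ∀ i < n, (-(digraphLaplacian E w)).charpoly.coeff i = forestSum E w (n - i) := by
    intro i hi
    simpa using coeff_charpoly_neg_digraphLaplacian E w hE (i := i) (by simpa using hi.le)
  refine ⟨h, fun i hi => ?_⟩
  rw [← Matrix.transpose_neg, Matrix.charpoly_transpose]
  exact h i hi
end

section
/- Fix n ≥ 2 (and n ≥ 3 for the cycle). Treating the parameters as indeterminates: (1) the determinant of the (2n−1)×(2n−1) Jacobian matrix of the coefficient map of the n-compartment catenary model is not the zero polynomial; (2) the (2n−1)×(n+1) Jacobian matrix of the coefficient map of the n-compartment cycle model has rank n+1 at some real parameter point; (3) the determinant of the (2n−1)×(2n−1) Jacobian matrix of the coefficient map of the n-compartment mammillary model is not the zero polynomial. Hence the catenary, cycle, and mammillary models are generically locally identifiable. -/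
/-!
The Jacobian at a real point `p` has trivial kernel as soon as the model is identifiable to first
order at `p`. Indeed, over the dual numbers `ℝ[ε]` one has `f(p + εv) = f(p) + ε ∑ₜ vₜ ∂ₜf(p)`
(`aeval_dualNumber`), so a kernel vector `v` yields two parameter points `p + εv` and `p` over
`ℝ[ε]` with the same characteristic polynomials `P = det (λI - A)` and `Q = det (λI - A₁₁)`
(`charpoly_dualNumber_eq`). It therefore suffices to recover the parameters from `P` and `Q` over
a general commutative ring under hypotheses that certain elements are units; in `ℝ[ε]` these only
concern the real parts, and hold at a well-chosen `p`.

In each model `P = (λ + α) Q - r` with `deg r < deg Q`, and `Q` is monic, so `P` and `Q` determine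
`α` and `r` (`quotient_remainder_unique`).

* Catenary: `r = a₁₂ a₂₁ Q₂`, where `Q₂` belongs to the model without its first two compartments.
  Iterating, this is the continued fraction expansion of `P / Q`, and the parameters are found
  successively from the last compartment up (`catMatrix_unique`).
* Cycle: `Q = ∏ (λ + b k)` and `r = a₂₁ ∏ b k` (`cycMatrix_unique`). Distinct roots of `Q` can be
  followed to first order (`roots_unique`).
* Mammillary: `Q = ∏ (λ + a1K k)` again, and `r` is a sum whose values at the roots of `Q` give the
  `aK1 k` (`mamMatrix_unique`).
-/


open MvPolynomial

section Catenary

/-- The catenary (path) compartmental matrix with `n = m + 2` compartments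
(`up k = a_{k+1,k+2}`, `down k = a_{k+2,k+1}`). -/
def catMatrix {R : Type*} [CommRing R] (m : ℕ) (a01 : R) (up down : Fin (m + 1) → R) :
    Matrix (Fin (m + 2)) (Fin (m + 2)) R :=
  Matrix.of fun i j =>
    if i = j then
      (if i.val = 0 then -a01 - down 0
       else if h : i.val = m + 1 then -(up (Fin.last m))
       else -(up ⟨i.val - 1, by have := i.isLt; omega⟩)
            - down ⟨i.val, by have := i.isLt; omega⟩)
    else if h : j.val = i.val + 1 then up ⟨i.val, by have := j.isLt; omega⟩
    else if h' : i.val = j.val + 1 then down ⟨j.val, by have := i.isLt; omega⟩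
    else 0

/-- Parameter index type for the catenary model: `.inl 0 ↦ a₀₁`,
`.inl (k+1) ↦ a_{k+1,k+2}`, `.inr k ↦ a_{k+2,k+1}`. -/
abbrev CatIx (m : ℕ) := Fin (m + 2) ⊕ Fin (m + 1)

/-- The catenary compartmental matrix with the parameters as indeterminates. -/
noncomputable def catA (m : ℕ) :
    Matrix (Fin (m + 2)) (Fin (m + 2)) (MvPolynomial (CatIx m) ℝ) :=
  catMatrix m (X (Sum.inl 0)) (fun k => X (Sum.inl k.succ)) (fun k => X (Sum.inr k))

/-- The coefficients `(c₀,…,c_{n-1},d₀,…,d_{n-2})` of the catenary model. -/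
noncomputable def catCoeff (m : ℕ) : CatIx m → MvPolynomial (CatIx m) ℝ :=
  Sum.elim (fun i => (catA m).charpoly.coeff i.val)
    (fun i => ((catA m).submatrix Fin.succ Fin.succ).charpoly.coeff i.val)

/-- The Jacobian matrix of the coefficient map of the catenary model. -/
noncomputable def catJac (m : ℕ) : Matrix (CatIx m) (CatIx m) (MvPolynomial (CatIx m) ℝ) :=
  Matrix.of fun s t => MvPolynomial.pderiv t (catCoeff m s)

end Catenary

section Cycle

/-- Index `i : Fin (m+3)` recast in `Fin (m+2)` as `i - 1`. -/
def subOne' {m : ℕ} (i : Fin (m + 3)) : Fin (m + 2) :=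
  ⟨i.val - 1, by have := i.isLt; omega⟩

/-- The cycle compartmental matrix with `n = m + 3` compartments
(`b k = a_{k+3,k+2}` for `k ≤ m`, `b (m+1) = a_{1n}`). -/
def cycMatrix {R : Type*} [CommRing R] (m : ℕ) (a01 a21 : R) (b : Fin (m + 2) → R) :
    Matrix (Fin (m + 3)) (Fin (m + 3)) R :=
  Matrix.of fun i j =>
    if i = 0 ∧ j = 0 then -a01 - a21
    else if i = 0 ∧ j.val = m + 2 then b (Fin.last (m + 1))
    else if i.val = j.val + 1 then (if j = 0 then a21 else b (subOne' j))
    else if i = j then -(b (subOne' i))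
    else 0

/-- Parameter index type for the cycle model: `.inl 0 ↦ a₀₁`, `.inl 1 ↦ a₂₁`,
`.inr k ↦ a_{k+3,k+2}` (with `.inr (m+1) ↦ a_{1n}`). -/
abbrev CycIx (m : ℕ) := Fin 2 ⊕ Fin (m + 2)

/-- The cycle compartmental matrix with the parameters as indeterminates. -/
noncomputable def cycA (m : ℕ) :
    Matrix (Fin (m + 3)) (Fin (m + 3)) (MvPolynomial (CycIx m) ℝ) :=
  cycMatrix m (X (Sum.inl 0)) (X (Sum.inl 1)) (fun k => X (Sum.inr k))

/-- The coefficients `(c₀,…,c_{n-1},d₀,…,d_{n-2})` of the cycle model. -/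
noncomputable def cycCoeff (m : ℕ) : Fin (m + 3) ⊕ Fin (m + 2) → MvPolynomial (CycIx m) ℝ :=
  Sum.elim (fun i => (cycA m).charpoly.coeff i.val)
    (fun i => ((cycA m).submatrix Fin.succ Fin.succ).charpoly.coeff i.val)

/-- The `(2n-1) × (n+1)` Jacobian matrix of the coefficient map of the cycle model,
evaluated at a real parameter point `p`. -/
noncomputable def cycJacAt (m : ℕ) (p : CycIx m → ℝ) :
    Matrix (Fin (m + 3) ⊕ Fin (m + 2)) (CycIx m) ℝ :=
  Matrix.of fun s t => MvPolynomial.eval p (MvPolynomial.pderiv t (cycCoeff m s))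

end Cycle

section Mammillary

/-- Index `k : Fin (m+2)` recast in `Fin (m+1)` as `k - 1`. -/
def subOne {m : ℕ} (k : Fin (m + 2)) : Fin (m + 1) :=
  ⟨k.val - 1, by have := k.isLt; omega⟩

/-- The mammillary (star) compartmental matrix with `n = m + 2` compartments
(`aK1 k = a_{k+2,1}`, `a1K k = a_{1,k+2}`). -/
def mamMatrix {R : Type*} [CommRing R] (m : ℕ) (a01 : R) (aK1 a1K : Fin (m + 1) → R) :
    Matrix (Fin (m + 2)) (Fin (m + 2)) R :=
  Matrix.of fun i j =>
    if i = 0 then (if j = 0 then -a01 - ∑ k, aK1 k else a1K (subOne j))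
    else if j = 0 then aK1 (subOne i)
    else if i = j then -(a1K (subOne i)) else 0

/-- Parameter index type for the mammillary model: `.inl 0 ↦ a₀₁`,
`.inl (k+1) ↦ a_{k+2,1}`, `.inr k ↦ a_{1,k+2}`. -/
abbrev MamIx (m : ℕ) := Fin (m + 2) ⊕ Fin (m + 1)

/-- The mammillary compartmental matrix with the parameters as indeterminates. -/
noncomputable def mamA (m : ℕ) :
    Matrix (Fin (m + 2)) (Fin (m + 2)) (MvPolynomial (MamIx m) ℝ) :=
  mamMatrix m (X (Sum.inl 0)) (fun k => X (Sum.inl k.succ)) (fun k => X (Sum.inr k))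

/-- The coefficients `(c₀,…,c_{n-1},d₀,…,d_{n-2})` of the mammillary model. -/
noncomputable def mamCoeff (m : ℕ) : MamIx m → MvPolynomial (MamIx m) ℝ :=
  Sum.elim (fun i => (mamA m).charpoly.coeff i.val)
    (fun i => ((mamA m).submatrix Fin.succ Fin.succ).charpoly.coeff i.val)

/-- The Jacobian matrix of the coefficient map of the mammillary model. -/
noncomputable def mamJac (m : ℕ) : Matrix (MamIx m) (MamIx m) (MvPolynomial (MamIx m) ℝ) :=
  Matrix.of fun s t => MvPolynomial.pderiv t (mamCoeff m s)

end Mammillary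

/-! ### Characteristic polynomials over the dual numbers -/

lemma charmatrix_submatrix_of_injective {R : Type*} [CommRing R] {k l : ℕ}
    (M : Matrix (Fin k) (Fin k) R) (f : Fin l → Fin k) (hf : Function.Injective f) :
    (M.submatrix f f).charmatrix = M.charmatrix.submatrix f f := by
  ext1 i j
  by_cases h : i = j
  · subst h; simp [Matrix.charmatrix_apply_eq]
  · simp [Matrix.charmatrix_apply_ne _ _ _ h, Matrix.charmatrix_apply_ne _ _ _ (hf.ne h)]

/-- First-order Taylor expansion of a polynomial over the dual numbers:
`f(p + εv) = f(p) + ε ∑ₜ vₜ ∂ₜf(p)`. -/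
lemma aeval_dualNumber {σ : Type*} [Fintype σ] (p v : σ → ℝ) (f : MvPolynomial σ ℝ) :
    aeval (fun t => (TrivSqZeroExt.inl (p t) + TrivSqZeroExt.inr (v t) : DualNumber ℝ)) f
      = TrivSqZeroExt.inl (eval p f) + TrivSqZeroExt.inr (∑ t, eval p (pderiv t f) * v t) := by
  classical
  induction f using MvPolynomial.induction_on with
  | C a =>
    ext <;> simp [TrivSqZeroExt.algebraMap_eq_inl]
  | add f g hf hg =>
    rw [map_add, hf, hg]
    ext <;> simp [add_mul, Finset.sum_add_distrib]
  | mul_X f i hf =>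
    rw [map_mul, hf, aeval_X]
    ext
    · simp
    · have h : ∀ t, eval p (pderiv t (f * X i)) * v t
          = p i * (eval p (pderiv t f) * v t) + (if t = i then v t * eval p f else 0) := by
        intro t
        rw [Derivation.leibniz, pderiv_X]
        by_cases ht : t = i
        · subst ht; simp; ring
        · simp [ht, Ne.symm ht]; ring
      simp only [h, Finset.sum_add_distrib, ← Finset.mul_sum]
      simp [mul_comm]

/-- If `v` is annihilated by the Jacobian at `p` of the coefficients of `det (λI - A)`, then
`A(p + εv)` and `A(p)` have the same characteristic polynomial over the dual numbers. The base
point is written `p + ε0` so that both sides have the same shape. -/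
lemma charpoly_dualNumber_eq {σ : Type*} [Fintype σ] {k : ℕ}
    (A : Matrix (Fin k) (Fin k) (MvPolynomial σ ℝ)) (p v : σ → ℝ)
    (h : ∀ i : Fin k, ∑ t, eval p (pderiv t (A.charpoly.coeff i)) * v t = 0) :
    (A.map (aeval (fun t => (TrivSqZeroExt.inl (p t) + TrivSqZeroExt.inr (v t) :
      DualNumber ℝ)))).charpoly
    = (A.map (aeval (fun t => (TrivSqZeroExt.inl (p t) + TrivSqZeroExt.inr 0 :
      DualNumber ℝ)))).charpoly := by
  have hc : ∀ (w : σ → ℝ) (i : ℕ), (A.map (aeval (fun t => (TrivSqZeroExt.inl (p t) +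
      TrivSqZeroExt.inr (w t) : DualNumber ℝ)))).charpoly.coeff i
      = TrivSqZeroExt.inl (eval p (A.charpoly.coeff i))
        + TrivSqZeroExt.inr (∑ t, eval p (pderiv t (A.charpoly.coeff i)) * w t) := by
    intro w i
    rw [← aeval_dualNumber]
    have := Matrix.charpoly_map A (aeval (fun t => (TrivSqZeroExt.inl (p t) +
      TrivSqZeroExt.inr (w t) : DualNumber ℝ))).toRingHom
    have h2 := congrArg (fun q => Polynomial.coeff q i) this
    simpa using h2
  ext1 i
  rw [hc v i, hc (fun _ => 0) i]
  rcases lt_or_ge i k with hi | hi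
  · rw [h ⟨i, hi⟩]; simp
  · -- The characteristic polynomial is monic of degree `k`, so its coefficients from degree `k`
    -- on are constants.
    have : ∀ t, pderiv t (A.charpoly.coeff i) = 0 := by
      intro t
      rcases hi.eq_or_lt with rfl | hi
      · have h1 := A.charpoly_monic.coeff_natDegree
        rw [Matrix.charpoly_natDegree_eq_dim, Fintype.card_fin] at h1
        rw [h1]; exact Derivation.map_one_eq_zero _
      · rw [Polynomial.coeff_eq_zero_of_natDegree_lt, map_zero]
        simpa [Matrix.charpoly_natDegree_eq_dim] using hi
    simp [this]

/-- Uniqueness of division by a polynomial `Q` with linear quotient. When `Q` is monic of degree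
`k`, the conditions on `r` and `r'` hold for remainders. -/
lemma quotient_remainder_unique {R : Type*} [CommRing R] {k : ℕ} {Q r r' : Polynomial R}
    {α α' : R} (hQ : Q.coeff k = 1) (hr : r.coeff k = 0) (hr' : r'.coeff k = 0)
    (h : (Polynomial.X + Polynomial.C α) * Q - r = (Polynomial.X + Polynomial.C α') * Q - r') :
    α = α' ∧ r = r' := by
  have h1 : Polynomial.C (α - α') * Q = r - r' := by
    rw [map_sub]; linear_combination h
  have h2 := congrArg (fun q => Polynomial.coeff q k) h1
  simp only [Polynomial.coeff_C_mul, Polynomial.coeff_sub, hQ, hr, hr'] at h2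
  have h3 : α = α' := by linear_combination h2
  refine ⟨h3, ?_⟩
  subst h3
  linear_combination -h

lemma charpoly_coeff_dim {R : Type*} [CommRing R] {k : ℕ} (A : Matrix (Fin k) (Fin k) R) :
    A.charpoly.coeff k = 1 := by
  nontriviality R
  have h1 := A.charpoly_monic.coeff_natDegree
  rwa [Matrix.charpoly_natDegree_eq_dim, Fintype.card_fin] at h1

lemma charpoly_coeff_gt {R : Type*} [CommRing R] {k l : ℕ} (A : Matrix (Fin k) (Fin k) R)
    (h : k < l) : A.charpoly.coeff l = 0 := by
  nontriviality R
  apply Polynomial.coeff_eq_zero_of_natDegree_lt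
  simpa [Matrix.charpoly_natDegree_eq_dim] using h

/-- Over an arbitrary commutative ring a product of linear factors determines its roots as an
indexed family, once the differences between distinct indices are units: this is a form of
Hensel uniqueness of simple roots. Evaluating at `-b j` leaves `b' j - b j` times a unit. -/
lemma roots_unique {R ι : Type*} [CommRing R] [Fintype ι] [DecidableEq ι] {b b' : ι → R}
    (hu : ∀ i j, i ≠ j → IsUnit (b' i - b j))
    (h : ∏ k, (Polynomial.X + Polynomial.C (b k)) = ∏ k, (Polynomial.X + Polynomial.C (b' k))) :
    b = b' := by
  ext j
  have h1 := congrArg (Polynomial.eval (-b j)) h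
  simp only [Polynomial.eval_prod, Polynomial.eval_add, Polynomial.eval_X, Polynomial.eval_C]
    at h1
  rw [Finset.prod_eq_zero (Finset.mem_univ j) (by simp : -b j + b j = 0),
    ← Finset.mul_prod_erase _ _ (Finset.mem_univ j)] at h1
  have h2 : IsUnit (∏ k ∈ Finset.univ.erase j, (-b j + b' k)) := by
    apply IsUnit.prod_iff.2
    intro k hk
    rw [neg_add_eq_sub]
    exact hu k j (Finset.ne_of_mem_erase hk)
  have h3 := (h2.mul_left_eq_zero).1 h1.symm
  linear_combination -h3

/-! ### Catenary -/

/-- The three-term recursion for tridiagonal determinants, which only needs the first row and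
column to be supported on the first two indices. -/
lemma det_tridiagonal_top {R : Type*} [CommRing R] {k : ℕ}
    (M : Matrix (Fin (k + 2)) (Fin (k + 2)) R) (hr : ∀ j : Fin k, M 0 j.succ.succ = 0)
    (hc : ∀ j : Fin k, M j.succ.succ 0 = 0) :
    M.det = M 0 0 * (M.submatrix Fin.succ Fin.succ).det
      - M 0 1 * M 1 0 *
        ((M.submatrix Fin.succ Fin.succ).submatrix Fin.succ Fin.succ).det := by
  rw [Matrix.det_succ_row_zero, Fin.sum_univ_succ, Fin.sum_univ_succ]
  rw [Finset.sum_eq_zero (s := Finset.univ) (f := fun i : Fin k => _)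
    (fun j _ => by rw [hr]; simp)]
  have h2 : (M.submatrix Fin.succ (Fin.succAbove (Fin.succ 0))).det
      = M 1 0 * ((M.submatrix Fin.succ Fin.succ).submatrix Fin.succ Fin.succ).det := by
    rw [Matrix.det_succ_column_zero, Fin.sum_univ_succ]
    rw [Finset.sum_eq_zero]
    · have h3 : (M.submatrix Fin.succ (Fin.succAbove (Fin.succ 0))).submatrix
          (Fin.succAbove 0) Fin.succ
          = (M.submatrix Fin.succ Fin.succ).submatrix Fin.succ Fin.succ := by
        ext i j
        simp
      rw [h3]
      simp
    · intro i _
      have : M i.succ.succ 0 = 0 := hc i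
      simp [this]
  rw [h2]
  simp
  ring

lemma charpoly_tridiagonal_top {R : Type*} [CommRing R] {k : ℕ}
    (M : Matrix (Fin (k + 2)) (Fin (k + 2)) R) (hr : ∀ j : Fin k, M 0 j.succ.succ = 0)
    (hc : ∀ j : Fin k, M j.succ.succ 0 = 0) :
    M.charpoly = (Polynomial.X + Polynomial.C (- M 0 0)) *
        (M.submatrix Fin.succ Fin.succ).charpoly
      - Polynomial.C (M 0 1 * M 1 0) *
        ((M.submatrix Fin.succ Fin.succ).submatrix Fin.succ Fin.succ).charpoly := by
  unfold Matrix.charpoly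
  rw [det_tridiagonal_top, charmatrix_submatrix_of_injective _ _ (Fin.succ_injective _),
    charmatrix_submatrix_of_injective _ _ (Fin.succ_injective _),
    charmatrix_submatrix_of_injective _ _ (Fin.succ_injective _),
    Matrix.charmatrix_apply_eq, Matrix.charmatrix_apply_ne _ 0 1 (by simp),
    Matrix.charmatrix_apply_ne _ 1 0 (by simp)]
  · simp only [map_mul, map_neg]; ring
  · intro j
    rw [Matrix.charmatrix_apply_ne _ _ _ (Fin.succ_ne_zero _).symm, hr]; simp
  · intro j
    rw [Matrix.charmatrix_apply_ne _ _ _ (Fin.succ_ne_zero _), hc]; simp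

/-- Removing the first compartment of a catenary model leaves a catenary model, in which `a₁₂`
plays the role of the leak. -/
lemma catMatrix_submatrix {R : Type*} [CommRing R] (m : ℕ) (a : R) (up down : Fin (m + 2) → R) :
    (catMatrix (m + 1) a up down).submatrix Fin.succ Fin.succ
      = catMatrix m (up 0) (fun k => up k.succ) (fun k => down k.succ) := by
  ext i j
  have hi := i.isLt
  have hj := j.isLt
  simp only [catMatrix, Matrix.submatrix_apply, Matrix.of_apply, Fin.ext_iff, Fin.val_succ]
  split_ifs <;> first
    | omega
    | rfl
    | (exfalso; tauto)
    | exact congrArg₂ (fun x y => -up x - down y)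
        (Fin.ext (by simp only [Fin.val_succ, Fin.val_zero]; omega))
        (Fin.ext (by simp only [Fin.val_succ, Fin.val_zero]; omega))
    | exact congrArg₂ (fun x y => -up x - down y)
        (Fin.ext (by simp only [Fin.val_succ]; omega)) rfl

/-- Catenary parameters are determined by the two characteristic polynomials, over any commutative
ring in which the exchange parameters are units. Dividing `P` by `Q` gives `a₀₁ + a₂₁`,
`a₁₂a₂₁` and the characteristic polynomial of the model without its first two compartments, so
that the induction hypothesis applies to the model without its first compartment. -/
lemma catMatrix_unique {R : Type*} [CommRing R] (m : ℕ) : ∀ (a a' : R)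
    (up down up' down' : Fin (m + 1) → R), (∀ k, IsUnit (up k)) → (∀ k, IsUnit (down k)) →
    (catMatrix m a up down).charpoly = (catMatrix m a' up' down').charpoly →
    ((catMatrix m a up down).submatrix Fin.succ Fin.succ).charpoly
      = ((catMatrix m a' up' down').submatrix Fin.succ Fin.succ).charpoly →
    a = a' ∧ up = up' ∧ down = down' := by
  -- One division step of the continued fraction of `P / Q`.
  have key : ∀ (m : ℕ) (a a' : R) (up down up' down' : Fin (m + 1) → R),
      (catMatrix m a up down).charpoly = (catMatrix m a' up' down').charpoly →
      ((catMatrix m a up down).submatrix Fin.succ Fin.succ).charpoly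
        = ((catMatrix m a' up' down').submatrix Fin.succ Fin.succ).charpoly →
      a + down 0 = a' + down' 0 ∧ up 0 * down 0 = up' 0 * down' 0 ∧
      Polynomial.C (up 0 * down 0) * (((catMatrix m a up down).submatrix Fin.succ
        Fin.succ).submatrix Fin.succ Fin.succ).charpoly = Polynomial.C (up' 0 * down' 0) *
        (((catMatrix m a' up' down').submatrix Fin.succ Fin.succ).submatrix
          Fin.succ Fin.succ).charpoly := by
    intro m a a' up down up' down' hP hQ
    have e : ∀ (a : R) (up down : Fin (m + 1) → R), (catMatrix m a up down).charpoly =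
        (Polynomial.X + Polynomial.C (a + down 0)) *
          ((catMatrix m a up down).submatrix Fin.succ Fin.succ).charpoly
        - Polynomial.C (up 0 * down 0) * (((catMatrix m a up down).submatrix Fin.succ
          Fin.succ).submatrix Fin.succ Fin.succ).charpoly := by
      intro a up down
      rw [charpoly_tridiagonal_top]
      · have h1 : -(catMatrix m a up down) 0 0 = a + down 0 := by simp [catMatrix, add_comm]
        have h2 : (catMatrix m a up down) 0 1 = up 0 := by simp [catMatrix]
        have h3 : (catMatrix m a up down) 1 0 = down 0 := by simp [catMatrix]
        rw [h1, h2, h3]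
      · intro j
        simp only [catMatrix, Matrix.of_apply, Fin.ext_iff, Fin.val_succ, Fin.val_zero]
        split_ifs <;> first | omega | (exfalso; tauto) | rfl
      · intro j
        simp only [catMatrix, Matrix.of_apply, Fin.ext_iff, Fin.val_succ, Fin.val_zero]
        split_ifs <;> first | omega | (exfalso; tauto) | rfl
    rw [e, e a', hQ] at hP
    obtain ⟨h1, h2⟩ := quotient_remainder_unique (k := m + 1) (charpoly_coeff_dim _)
      (by rw [Polynomial.coeff_C_mul, charpoly_coeff_gt _ (Nat.lt_succ_self m), mul_zero])
      (by rw [Polynomial.coeff_C_mul, charpoly_coeff_gt _ (Nat.lt_succ_self m), mul_zero]) hP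
    refine ⟨h1, ?_, h2⟩
    -- The factors multiplying the two constants are monic of degree `m`.
    have h3 := congrArg (fun q => Polynomial.coeff q m) h2
    simpa only [Polynomial.coeff_C_mul, charpoly_coeff_dim, mul_one] using h3
  induction m with
  | zero =>
    intro a a' up down up' down' hu hd hP hQ
    obtain ⟨h1, h2, -⟩ := key 0 a a' up down up' down' hP hQ
    have h3 : up 0 = up' 0 := by
      have := congrArg (fun q => Polynomial.coeff q 0) hQ
      simp [Matrix.charpoly, Matrix.charmatrix_apply_eq, catMatrix] at this
      exact this
    have h4 : down 0 = down' 0 := by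
      rw [← h3] at h2; exact (hu 0).mul_left_cancel h2
    refine ⟨by linear_combination h1 - h4, ?_, ?_⟩ <;> ext k <;> fin_cases k <;> assumption
  | succ m ih =>
    intro a a' up down up' down' hu hd hP hQ
    obtain ⟨h1, h2, h3⟩ := key (m + 1) a a' up down up' down' hP hQ
    rw [← h2] at h3
    have h4 := ((((hu 0).mul (hd 0)).map Polynomial.C)).mul_left_cancel h3
    rw [catMatrix_submatrix, catMatrix_submatrix] at hQ h4
    obtain ⟨h5, h6, h7⟩ := ih _ _ _ _ _ _ (fun k => hu k.succ) (fun k => hd k.succ) hQ h4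
    have h8 : down 0 = down' 0 := by
      rw [← h5] at h2; exact (hu 0).mul_left_cancel h2
    refine ⟨by linear_combination h1 - h8, ?_, ?_⟩
    · ext k; cases k using Fin.cases with
      | zero => exact h5
      | succ k => exact congrFun h6 k
    · ext k; cases k using Fin.cases with
      | zero => exact h8
      | succ k => exact congrFun h7 k

/-! ### Cycle -/

lemma cycMatrix_sub_charpoly {R : Type*} [CommRing R] (m : ℕ) (a01 a21 : R)
    (b : Fin (m + 2) → R) :
    ((cycMatrix m a01 a21 b).submatrix Fin.succ Fin.succ).charpoly
      = ∏ k, (Polynomial.X + Polynomial.C (b k)) := by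
  have hd : ∀ i, (cycMatrix m a01 a21 b).submatrix Fin.succ Fin.succ i i = - b i := by
    intro i
    simp [cycMatrix, subOne']
  rw [Matrix.charpoly, Matrix.det_of_isLowerTriangular]
  · refine Finset.prod_congr rfl fun i _ => ?_
    rw [Matrix.charmatrix_apply_eq, hd]; simp
  · intro i j hij
    have hij : i.val < j.val := hij
    rw [Matrix.charmatrix_apply_ne _ _ _ (by rintro rfl; omega)]
    have : (cycMatrix m a01 a21 b).submatrix Fin.succ Fin.succ i j = 0 := by
      simp only [cycMatrix, Matrix.submatrix_apply, Matrix.of_apply, Fin.ext_iff, Fin.val_succ,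
        Fin.val_zero]
      split_ifs <;> first | omega | (exfalso; tauto) | rfl
    rw [this]; simp

/-- The characteristic polynomial is `(λ + a₀₁ + a₂₁) Q - a₂₁ ∏ b`: the two nonzero entries of the
first row contribute the diagonal term and the full cycle. -/
lemma cycMatrix_charpoly {R : Type*} [CommRing R] (m : ℕ) (a01 a21 : R)
    (b : Fin (m + 2) → R) :
    (cycMatrix m a01 a21 b).charpoly
      = (Polynomial.X + Polynomial.C (a01 + a21)) *
          ((cycMatrix m a01 a21 b).submatrix Fin.succ Fin.succ).charpoly
        - Polynomial.C (a21 * ∏ k, b k) := by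
  set M := cycMatrix m a01 a21 b with hM
  -- The minor of the top right entry is triangular, with the former subdiagonal as diagonal.
  have hminor : (M.charmatrix.submatrix Fin.succ Fin.castSucc).det
      = (-1) ^ (m + 2) * Polynomial.C (a21 * ∏ k : Fin (m + 1), b k.castSucc) := by
    rw [Matrix.det_of_isUpperTriangular]
    · have : ∀ i : Fin (m + 2), M.charmatrix.submatrix Fin.succ Fin.castSucc i i
          = (-1) * Polynomial.C ((Fin.cons a21 (fun k : Fin (m + 1) => b k.castSucc) :
            Fin (m + 2) → R) i) := by
        intro i
        rw [Matrix.submatrix_apply, Matrix.charmatrix_apply_ne _ _ _ (Fin.castSucc_lt_succ).ne']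
        cases i using Fin.cases with
        | zero => simp [hM, cycMatrix]
        | succ i =>
          have : M i.succ.succ i.succ.castSucc = b i.castSucc := by
            simp only [hM, cycMatrix, Matrix.of_apply, Fin.ext_iff, Fin.val_succ, Fin.val_zero,
              Fin.val_castSucc]
            split_ifs <;> first | omega | (exfalso; tauto) | rfl
          rw [this]; simp
      rw [Finset.prod_congr rfl fun i _ => this i, Finset.prod_mul_distrib, ← map_prod,
        Fin.prod_cons]
      simp
    · intro i j hij
      have hij : j.val < i.val := hij
      have hne : i.succ ≠ j.castSucc := by
        intro h; have := congrArg Fin.val h; simp at this; omega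
      rw [Matrix.submatrix_apply, Matrix.charmatrix_apply_ne _ _ _ hne]
      have : M i.succ j.castSucc = 0 := by
        simp only [hM, cycMatrix, Matrix.of_apply, Fin.ext_iff, Fin.val_succ, Fin.val_zero,
          Fin.val_castSucc]
        split_ifs <;> first | omega | (exfalso; tauto) | rfl
      rw [this]; simp
  have h00 : M.charmatrix 0 0 = Polynomial.X + Polynomial.C (a01 + a21) := by
    rw [Matrix.charmatrix_apply_eq]; simp [hM, cycMatrix]; ring
  have h0l : M.charmatrix 0 (Fin.last (m + 2)) = - Polynomial.C (b (Fin.last (m + 1))) := by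
    rw [Matrix.charmatrix_apply_ne _ _ _ (Fin.last_pos).ne]
    simp [hM, cycMatrix]
  have hmid : ∀ j : Fin (m + 1), M.charmatrix 0 j.castSucc.succ = 0 := by
    intro j
    rw [Matrix.charmatrix_apply_ne _ _ _ (Fin.succ_ne_zero _).symm]
    have : M 0 j.castSucc.succ = 0 := by
      have := j.isLt
      simp only [hM, cycMatrix, Matrix.of_apply, Fin.ext_iff, Fin.val_succ, Fin.val_zero,
          Fin.val_castSucc]
      split_ifs <;> first | omega | (exfalso; tauto) | rfl
    rw [this]; simp
  have hs : (-1 : Polynomial R) ^ (m + 2) * (-1) ^ (m + 2) = 1 := by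
    rw [← mul_pow]; simp
  have hp : ∏ k, b k = (∏ k : Fin (m + 1), b k.castSucc) * b (Fin.last (m + 1)) :=
    Fin.prod_univ_castSucc b
  rw [Matrix.charpoly, Matrix.charpoly, Matrix.det_succ_row_zero, Fin.sum_univ_succ,
    Fin.sum_univ_castSucc, Finset.sum_eq_zero (fun j _ => by rw [hmid]; simp),
    Fin.succ_last, Fin.succAbove_last, hminor, h00, h0l,
    charmatrix_submatrix_of_injective _ _ (Fin.succ_injective _),
    hp]
  simp only [Fin.val_zero, Fin.val_last, Nat.succ_eq_add_one, Fin.succAbove_zero, map_mul]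
  linear_combination (- Polynomial.C (b (Fin.last (m + 1))) * (Polynomial.C a21 *
    Polynomial.C (∏ k : Fin (m + 1), b k.castSucc))) * hs

/-- Cycle parameters are determined by the two characteristic polynomials: `Q` has roots `-b k`,
and division of `P` by `Q` then gives `a₀₁ + a₂₁` and `a₂₁ ∏ b`. -/
lemma cycMatrix_unique {R : Type*} [CommRing R] (m : ℕ) (a01 a21 a01' a21' : R)
    (b b' : Fin (m + 2) → R) (hb : ∀ k, IsUnit (b k))
    (hu : ∀ i j, i ≠ j → IsUnit (b' i - b j))
    (hP : (cycMatrix m a01 a21 b).charpoly = (cycMatrix m a01' a21' b').charpoly)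
    (hQ : ((cycMatrix m a01 a21 b).submatrix Fin.succ Fin.succ).charpoly
      = ((cycMatrix m a01' a21' b').submatrix Fin.succ Fin.succ).charpoly) :
    a01 = a01' ∧ a21 = a21' ∧ b = b' := by
  have h1 : b = b' := by
    rw [cycMatrix_sub_charpoly, cycMatrix_sub_charpoly] at hQ
    exact roots_unique hu hQ
  subst h1
  rw [cycMatrix_charpoly, cycMatrix_charpoly m a01' a21', hQ] at hP
  obtain ⟨h2, h3⟩ := quotient_remainder_unique (k := m + 2) (charpoly_coeff_dim _)
    (Polynomial.coeff_C_of_ne_zero (by omega)) (Polynomial.coeff_C_of_ne_zero (by omega)) hP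
  have h4 : a21 = a21' :=
    (IsUnit.prod_univ_iff.2 hb).mul_right_cancel (Polynomial.C_injective h3)
  exact ⟨by linear_combination h2 - h4, h4, rfl⟩

/-! ### Mammillary -/

/-- The determinant of an arrow matrix, i.e. one that is diagonal away from its first row and
column. -/
lemma det_arrow {R : Type*} [CommRing R] {k : ℕ} (M : Matrix (Fin (k + 2)) (Fin (k + 2)) R)
    (h : ∀ i j : Fin (k + 1), i ≠ j → M i.succ j.succ = 0) :
    M.det = M 0 0 * (M.submatrix Fin.succ Fin.succ).det
      - ∑ j : Fin (k + 1), M 0 j.succ * M j.succ 0 *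
          ∏ i ∈ Finset.univ.erase j, M i.succ i.succ := by
  have hminor : ∀ j : Fin (k + 1), (M.submatrix Fin.succ j.succ.succAbove).det
      = (-1) ^ (j : ℕ) * (M j.succ 0 * ∏ i ∈ Finset.univ.erase j, M i.succ i.succ) := by
    intro j
    -- Row `j` of this minor is supported on its first column.
    rw [Matrix.det_succ_row _ j, Fin.sum_univ_succ, Finset.sum_eq_zero]
    · have h1 : (M.submatrix Fin.succ j.succ.succAbove).submatrix j.succAbove
          (Fin.succAbove 0) = Matrix.diagonal fun i => M (j.succAbove i).succ
            (j.succAbove i).succ := by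
        ext i l
        rw [Matrix.submatrix_apply, Matrix.submatrix_apply, Fin.succAbove_zero,
          Fin.succ_succAbove_succ]
        by_cases hil : i = l
        · subst hil; simp
        · rw [Matrix.diagonal_apply_ne _ hil]
          exact h _ _ (Fin.succAbove_right_injective.ne hil)
      have h2 : ∏ i ∈ Finset.univ.erase j, M i.succ i.succ
          = ∏ i, M (j.succAbove i).succ (j.succAbove i).succ := by
        rw [← Finset.compl_singleton, ← Fin.image_succAbove_univ, Finset.prod_image]
        exact fun a _ b _ hab => Fin.succAbove_right_injective hab
      rw [h1, Matrix.det_diagonal, h2]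
      simp [mul_assoc]
    · intro l _
      rw [Matrix.submatrix_apply, Fin.succ_succAbove_succ, h _ _ (Fin.succAbove_ne j l).symm]
      simp
  rw [Matrix.det_succ_row_zero, Fin.sum_univ_succ, sub_eq_add_neg, ← Finset.sum_neg_distrib]
  congr 1
  · simp
  · refine Finset.sum_congr rfl fun j _ => ?_
    rw [hminor, Fin.val_succ, pow_succ]
    have hs : ((-1 : R) ^ (j : ℕ)) * (-1) ^ (j : ℕ) = 1 := by
      rw [← mul_pow]; simp
    linear_combination (- M 0 j.succ * (M j.succ 0 *
      ∏ i ∈ Finset.univ.erase j, M i.succ i.succ)) * hs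

lemma mamMatrix_sub_charpoly {R : Type*} [CommRing R] (m : ℕ) (a01 : R)
    (c b : Fin (m + 1) → R) :
    ((mamMatrix m a01 c b).submatrix Fin.succ Fin.succ).charpoly
      = ∏ k, (Polynomial.X + Polynomial.C (b k)) := by
  have : (mamMatrix m a01 c b).submatrix Fin.succ Fin.succ = Matrix.diagonal fun k => - b k := by
    ext i j
    by_cases h : i = j
    · subst h; simp [mamMatrix, subOne]
    · simp [mamMatrix, h]
  rw [this, Matrix.charpoly_diagonal]
  simp

lemma mamMatrix_charpoly {R : Type*} [CommRing R] (m : ℕ) (a01 : R)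
    (c b : Fin (m + 1) → R) :
    (mamMatrix m a01 c b).charpoly
      = (Polynomial.X + Polynomial.C (a01 + ∑ k, c k)) *
          ((mamMatrix m a01 c b).submatrix Fin.succ Fin.succ).charpoly
        - ∑ j, Polynomial.C (c j * b j) *
          ∏ i ∈ Finset.univ.erase j, (Polynomial.X + Polynomial.C (b i)) := by
  have hd : ∀ i : Fin (m + 1), (mamMatrix m a01 c b).charmatrix i.succ i.succ
      = Polynomial.X + Polynomial.C (b i) := by
    intro i
    rw [Matrix.charmatrix_apply_eq]; simp [mamMatrix, subOne]
  have hr : ∀ i : Fin (m + 1), (mamMatrix m a01 c b).charmatrix 0 i.succ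
      = - Polynomial.C (b i) := by
    intro i
    rw [Matrix.charmatrix_apply_ne _ _ _ (Fin.succ_ne_zero _).symm]; simp [mamMatrix, subOne]
  have hc : ∀ i : Fin (m + 1), (mamMatrix m a01 c b).charmatrix i.succ 0
      = - Polynomial.C (c i) := by
    intro i
    rw [Matrix.charmatrix_apply_ne _ _ _ (Fin.succ_ne_zero _)]; simp [mamMatrix, subOne]
  have h0 : (mamMatrix m a01 c b).charmatrix 0 0
      = Polynomial.X + Polynomial.C (a01 + ∑ k, c k) := by
    rw [Matrix.charmatrix_apply_eq]
    have : (mamMatrix m a01 c b) 0 0 = -(a01 + ∑ k, c k) := by simp [mamMatrix]; ring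
    rw [this, map_neg, sub_neg_eq_add]
  rw [Matrix.charpoly, det_arrow, Matrix.charpoly,
    charmatrix_submatrix_of_injective _ _ (Fin.succ_injective _)]
  · rw [h0]
    refine congrArg (_ - ·) (Finset.sum_congr rfl fun j _ => ?_)
    rw [hr, hc, map_mul, Finset.prod_congr rfl fun i _ => hd i]
    ring
  · intro i j hij
    rw [Matrix.charmatrix_apply_ne _ _ _ ((Fin.succ_injective _).ne hij)]
    simp [mamMatrix, hij]

/-- Mammillary parameters are determined by the two characteristic polynomials: `Q` has roots
`-b k`, division of `P` by `Q` gives `a₀₁ + ∑ c` and the remainder, and evaluating the remainder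
at `-b l` isolates `c l` times a unit. -/
lemma mamMatrix_unique {R : Type*} [CommRing R] (m : ℕ) (a01 a01' : R)
    (c b c' b' : Fin (m + 1) → R) (hb : ∀ k, IsUnit (b k))
    (hu : ∀ i j, i ≠ j → IsUnit (b' i - b j))
    (hP : (mamMatrix m a01 c b).charpoly = (mamMatrix m a01' c' b').charpoly)
    (hQ : ((mamMatrix m a01 c b).submatrix Fin.succ Fin.succ).charpoly
      = ((mamMatrix m a01' c' b').submatrix Fin.succ Fin.succ).charpoly) :
    a01 = a01' ∧ c = c' ∧ b = b' := by
  have h1 : b = b' := by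
    rw [mamMatrix_sub_charpoly, mamMatrix_sub_charpoly] at hQ
    exact roots_unique hu hQ
  subst h1
  have hdeg : ∀ c : Fin (m + 1) → R, (∑ j, Polynomial.C (c j * b j) *
      ∏ i ∈ Finset.univ.erase j, (Polynomial.X + Polynomial.C (b i))).coeff (m + 1) = 0 := by
    intro c
    rw [Polynomial.finsetSum_coeff]
    refine Finset.sum_eq_zero fun j _ => ?_
    rw [Polynomial.coeff_C_mul, Polynomial.coeff_eq_zero_of_natDegree_lt, mul_zero]
    calc _ ≤ ∑ i ∈ Finset.univ.erase j, (Polynomial.X + Polynomial.C (b i)).natDegree :=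
          Polynomial.natDegree_prod_le _ _
      _ ≤ ∑ i ∈ Finset.univ.erase j, 1 := Finset.sum_le_sum (f := fun i =>
          (Polynomial.X + Polynomial.C (b i)).natDegree) fun i _ =>
          Polynomial.natDegree_add_C.le.trans Polynomial.natDegree_X_le
      _ < m + 1 := by simp
  rw [mamMatrix_charpoly, mamMatrix_charpoly m a01', hQ] at hP
  obtain ⟨h2, h3⟩ := quotient_remainder_unique (k := m + 1) (charpoly_coeff_dim _)
    (hdeg c) (hdeg c') hP
  have hev : ∀ (c : Fin (m + 1) → R) (l : Fin (m + 1)),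
      Polynomial.eval (-b l) (∑ j, Polynomial.C (c j * b j) *
        ∏ i ∈ Finset.univ.erase j, (Polynomial.X + Polynomial.C (b i)))
      = c l * (b l * ∏ i ∈ Finset.univ.erase l, (b i - b l)) := by
    intro c l
    rw [Polynomial.eval_finsetSum, Finset.sum_eq_single l]
    · simp [Polynomial.eval_prod, mul_assoc, neg_add_eq_sub]
    · intro j _ hj
      rw [Polynomial.eval_mul, Polynomial.eval_prod,
        Finset.prod_eq_zero (i := l) (by simp [hj.symm]) (by simp), mul_zero]
    · simp
  have h4 : c = c' := by
    ext l
    have h5 := congrArg (Polynomial.eval (-b l)) h3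
    rw [hev, hev] at h5
    refine IsUnit.mul_right_cancel ((hb l).mul (IsUnit.prod_iff.2 fun i hi => ?_)) h5
    exact hu i l (Finset.ne_of_mem_erase hi)
  subst h4
  exact ⟨by linear_combination h2, rfl, rfl⟩

/-! ### From dual numbers to Jacobians -/

lemma isUnit_perturbed {x : ℝ} (y : ℝ) (hx : x ≠ 0) :
    IsUnit (TrivSqZeroExt.inl x + TrivSqZeroExt.inr y : DualNumber ℝ) := by
  rw [TrivSqZeroExt.isUnit_iff_isUnit_fst]
  simpa using hx

lemma isUnit_perturbed_sub {x x' : ℝ} (y y' : ℝ) (hx : x ≠ x') :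
    IsUnit ((TrivSqZeroExt.inl x + TrivSqZeroExt.inr y : DualNumber ℝ)
      - (TrivSqZeroExt.inl x' + TrivSqZeroExt.inr y')) := by
  rw [TrivSqZeroExt.isUnit_iff_isUnit_fst]
  simpa [sub_eq_zero] using hx

lemma perturbed_inj {x y y' : ℝ} (h : (TrivSqZeroExt.inl x + TrivSqZeroExt.inr y : DualNumber ℝ)
    = TrivSqZeroExt.inl x + TrivSqZeroExt.inr y') : y = y' :=
  TrivSqZeroExt.inr_injective (add_left_cancel h)

/-- A polynomial matrix whose evaluation at a single point has trivial kernel has nonzero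
determinant. -/
lemma det_ne_zero_of_ker {σ : Type*} [Fintype σ] [DecidableEq σ]
    (J : Matrix σ σ (MvPolynomial σ ℝ)) (p : σ → ℝ)
    (h : ∀ v : σ → ℝ, (∀ s, ∑ t, eval p (J s t) * v t = 0) → v = 0) : J.det ≠ 0 := by
  intro h0
  have h1 : (J.map (eval p)).det = 0 := by
    have := RingHom.map_det (eval p) J
    rw [h0, map_zero] at this
    exact this.symm
  obtain ⟨v, hv, hv0⟩ := Matrix.exists_mulVec_eq_zero_iff.2 h1
  exact hv (h v fun s => congrFun hv0 s)

/-- A real matrix with trivial kernel has full column rank. -/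
lemma rank_eq_of_ker {s t : Type*} [Fintype s] [Fintype t] (M : Matrix s t ℝ)
    (h : ∀ v : t → ℝ, (∀ i, ∑ j, M i j * v j = 0) → v = 0) : M.rank = Fintype.card t := by
  rw [Matrix.rank, LinearMap.finrank_range_of_inj, Module.finrank_fintype_fun_eq_card]
  rw [injective_iff_map_eq_zero]
  exact fun v hv => h v fun i => congrFun hv i

lemma catA_map {S : Type*} [CommRing S] [Algebra ℝ S] (m : ℕ) (f : CatIx m → S) :
    (catA m).map (aeval f) = catMatrix m (f (Sum.inl 0)) (fun k => f (Sum.inl k.succ))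
      (fun k => f (Sum.inr k)) := by
  ext i j
  simp only [catA, catMatrix, Matrix.map_apply, Matrix.of_apply]
  split_ifs <;> simp

lemma cycA_map {S : Type*} [CommRing S] [Algebra ℝ S] (m : ℕ) (f : CycIx m → S) :
    (cycA m).map (aeval f) = cycMatrix m (f (Sum.inl 0)) (f (Sum.inl 1))
      (fun k => f (Sum.inr k)) := by
  ext i j
  simp only [cycA, cycMatrix, Matrix.map_apply, Matrix.of_apply]
  split_ifs <;> simp

lemma mamA_map {S : Type*} [CommRing S] [Algebra ℝ S] (m : ℕ) (f : MamIx m → S) :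
    (mamA m).map (aeval f) = mamMatrix m (f (Sum.inl 0)) (fun k => f (Sum.inl k.succ))
      (fun k => f (Sum.inr k)) := by
  ext i j
  simp only [mamA, mamMatrix, Matrix.map_apply, Matrix.of_apply]
  split_ifs <;> simp

/-- The Jacobian is already invertible at the point where all parameters equal `1`. -/
lemma catJac_det_ne_zero (m : ℕ) : (catJac m).det ≠ 0 := by
  apply det_ne_zero_of_ker _ (fun _ => 1)
  intro v hv
  have hP := charpoly_dualNumber_eq (catA m) (fun _ => 1) v fun i => hv (Sum.inl i)
  have hQ := charpoly_dualNumber_eq ((catA m).submatrix Fin.succ Fin.succ) (fun _ => 1) v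
    fun i => hv (Sum.inr i)
  rw [← Matrix.submatrix_map, ← Matrix.submatrix_map] at hQ
  rw [catA_map, catA_map] at hP hQ
  obtain ⟨h1, h2, h3⟩ := catMatrix_unique m _ _ _ _ _ _
    (fun k => isUnit_perturbed _ one_ne_zero) (fun k => isUnit_perturbed _ one_ne_zero) hP hQ
  ext t
  rcases t with t | t
  · cases t using Fin.cases with
    | zero => exact perturbed_inj h1
    | succ k => exact perturbed_inj (congrFun h2 k)
  · exact perturbed_inj (congrFun h3 t)

/-- Full rank at `a₀₁ = a₂₁ = 1`, `b k = k + 1`, where the `b k` are distinct and nonzero. -/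
lemma cycJacAt_rank (m : ℕ) :
    (cycJacAt m (Sum.elim (fun _ => 1) fun k => (k.val : ℝ) + 1)).rank = m + 4 := by
  rw [rank_eq_of_ker]
  · simp; omega
  intro v hv
  have hP := charpoly_dualNumber_eq (cycA m) _ v fun i => hv (Sum.inl i)
  have hQ := charpoly_dualNumber_eq ((cycA m).submatrix Fin.succ Fin.succ) _ v
    fun i => hv (Sum.inr i)
  rw [← Matrix.submatrix_map, ← Matrix.submatrix_map] at hQ
  rw [cycA_map, cycA_map] at hP hQ
  obtain ⟨h1, h2, h3⟩ := cycMatrix_unique m _ _ _ _ _ _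
    (fun k => isUnit_perturbed _ (Nat.cast_add_one_ne_zero _))
    (fun i j hij => isUnit_perturbed_sub _ _ (by simpa [Fin.ext_iff] using hij)) hP hQ
  ext t
  rcases t with t | t
  · fin_cases t
    · exact perturbed_inj h1
    · exact perturbed_inj h2
  · exact perturbed_inj (congrFun h3 t)

/-- The Jacobian is invertible at `a₀₁ = aK1 k = 1`, `a1K k = k + 1`, where the `a1K k` are
distinct and nonzero. -/
lemma mamJac_det_ne_zero (m : ℕ) : (mamJac m).det ≠ 0 := by
  apply det_ne_zero_of_ker _ (Sum.elim (fun _ => 1) fun k => (k.val : ℝ) + 1)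
  intro v hv
  have hP := charpoly_dualNumber_eq (mamA m) _ v fun i => hv (Sum.inl i)
  have hQ := charpoly_dualNumber_eq ((mamA m).submatrix Fin.succ Fin.succ) _ v
    fun i => hv (Sum.inr i)
  rw [← Matrix.submatrix_map, ← Matrix.submatrix_map] at hQ
  rw [mamA_map, mamA_map] at hP hQ
  obtain ⟨h1, h2, h3⟩ := mamMatrix_unique m _ _ _ _ _ _
    (fun k => isUnit_perturbed _ (Nat.cast_add_one_ne_zero _))
    (fun i j hij => isUnit_perturbed_sub _ _ (by simpa [Fin.ext_iff] using hij)) hP hQ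
  ext t
  rcases t with t | t
  · cases t using Fin.cases with
    | zero => exact perturbed_inj h1
    | succ k => exact perturbed_inj (congrFun h2 k)
  · exact perturbed_inj (congrFun h3 t)

/-- (1) The determinant of the Jacobian of the coefficient map of the
`(m+2)`-compartment catenary model is not the zero polynomial; (2) the `(2n-1) × (n+1)`
Jacobian of the coefficient map of the `(m+3)`-compartment cycle model attains rank
`n + 1 = m + 4` at some real parameter point; (3) the determinant of the Jacobian of the
coefficient map of the `(m+2)`-compartment mammillary model is not the zero polynomial.
Hence the catenary, cycle, and mammillary models are generically locally identifiable. -/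
theorem cat_cyc_mam_generically_identifiable (m : ℕ) :
    (catJac m).det ≠ 0 ∧
      (∃ p : CycIx m → ℝ, (cycJacAt m p).rank = m + 4) ∧
      (mamJac m).det ≠ 0 := by
  exact ⟨catJac_det_ne_zero m, ⟨_, cycJacAt_rank m⟩, mamJac_det_ne_zero m⟩
end

section
/- Fix n ≥ 2 and let A be the catenary compartmental matrix in the parameters a_{01}, a_{21}, a_{12}, a_{32}, a_{23}, …, a_{n,n−1}, a_{n−1,n}. Then the constant coefficient of det(λI − A) equals a_{01} · a_{12}a_{23}⋯a_{n−1,n}, and the constant coefficient of det(λI − A_{11}) equals a_{12}a_{23}⋯a_{n−1,n}, where A_{11} is A with its first row and column deleted. -/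
/-- The difference matrix, sending a vector `f` to the vector with entries `f i - f (i + 1)`, where
the entry of `f` past the last index counts as `0`. -/
def catDiff (R : Type*) [CommRing R] (n : ℕ) : Matrix (Fin n) (Fin n) R :=
  Matrix.of fun i k => if k = i then 1 else if k.val = i.val + 1 then -1 else 0

/-- The flow matrix: row `i` gives the net flow from compartment `i` to its left neighbour, which
is the environment when `i = 0`. -/
def catFlow {R : Type*} [CommRing R] (m : ℕ) (a01 : R) (up down : Fin (m + 1) → R) :
    Matrix (Fin (m + 2)) (Fin (m + 2)) R :=
  Matrix.of fun i j =>
    Fin.cases (if j = 0 then a01 else 0)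
      (fun k => if j = k.succ then up k else if j = k.castSucc then -down k else 0) i

lemma catDiff_mul_castSucc {R : Type*} [CommRing R] {n : ℕ}
    (M : Matrix (Fin (n + 1)) (Fin (n + 1)) R) (i : Fin n) (j : Fin (n + 1)) :
    (catDiff R (n + 1) * M) i.castSucc j = M i.castSucc j - M i.succ j := by
  have h : ∀ k : Fin (n + 1), catDiff R (n + 1) i.castSucc k * M k j =
      (if k = i.castSucc then M k j else 0) - (if k = i.succ then M k j else 0) := by
    intro k
    simp only [catDiff, Matrix.of_apply, Fin.ext_iff, Fin.val_castSucc, Fin.val_succ]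
    split_ifs <;> first | omega | simp
  simp [Matrix.mul_apply, h, Finset.sum_sub_distrib]

lemma catDiff_mul_last {R : Type*} [CommRing R] {n : ℕ} (M : Matrix (Fin (n + 1)) (Fin (n + 1)) R)
    (j : Fin (n + 1)) :
    (catDiff R (n + 1) * M) (Fin.last n) j = M (Fin.last n) j := by
  have h : ∀ k : Fin (n + 1), catDiff R (n + 1) (Fin.last n) k * M k j =
      if k = Fin.last n then M k j else 0 := by
    intro k
    have := k.isLt
    simp only [catDiff, Matrix.of_apply, Fin.ext_iff, Fin.val_last]
    split_ifs <;> first | omega | simp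
  simp [Matrix.mul_apply, h]

lemma det_catDiff (R : Type*) [CommRing R] (n : ℕ) : (catDiff R n).det = 1 := by
  rw [Matrix.det_of_isUpperTriangular]
  · simp [catDiff]
  · intro i j hij
    have : j.val < i.val := hij
    simp only [catDiff, Matrix.of_apply, Fin.ext_iff]
    split_ifs <;> first | omega | rfl

lemma catFlow_eq_zero {R : Type*} [CommRing R] {m : ℕ} (a01 : R) (up down : Fin (m + 1) → R)
    {i j : Fin (m + 2)} (hij : i < j) : catFlow m a01 up down i j = 0 := by
  induction i using Fin.cases with
  | zero => simp [catFlow, hij.ne']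
  | succ k =>
    have h : k.val + 1 < j.val := hij
    simp only [catFlow, Matrix.of_apply, Fin.cases_succ, Fin.ext_iff, Fin.val_succ,
      Fin.val_castSucc]
    split_ifs <;> first | omega | rfl

lemma det_catFlow {R : Type*} [CommRing R] (m : ℕ) (a01 : R) (up down : Fin (m + 1) → R) :
    (catFlow m a01 up down).det = a01 * ∏ k, up k := by
  rw [Matrix.det_of_isLowerTriangular _ fun i j hij => catFlow_eq_zero a01 up down hij,
    Fin.prod_univ_succ]
  simp [catFlow]

lemma det_catFlow_submatrix {R : Type*} [CommRing R] (m : ℕ) (a01 : R)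
    (up down : Fin (m + 1) → R) :
    ((catFlow m a01 up down).submatrix Fin.succ Fin.succ).det = ∏ k, up k := by
  rw [Matrix.det_of_isLowerTriangular]
  · simp [catFlow]
  · intro i j hij
    exact catFlow_eq_zero a01 up down (Fin.succ_lt_succ_iff.2 hij)

/-- Each row of `-A` is the difference of two consecutive flows; the last row is the
last flow alone, since nothing enters from the right. -/
lemma neg_catMatrix_eq_mul {R : Type*} [CommRing R] (m : ℕ) (a01 : R)
    (up down : Fin (m + 1) → R) :
    -catMatrix m a01 up down = catDiff R (m + 2) * catFlow m a01 up down := by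
  ext i j
  induction i using Fin.lastCases with
  | last =>
    rw [catDiff_mul_last, ← Fin.succ_last]
    have hm : Fin.last m = ⟨m, by omega⟩ := rfl
    obtain ⟨j, hj⟩ := j
    simp only [catMatrix, catFlow, Matrix.neg_apply, Matrix.of_apply, Fin.cases_succ, Fin.ext_iff,
      Fin.val_succ, Fin.val_castSucc, Fin.val_last, Fin.val_zero]
    split_ifs <;> first
      | omega
      | contradiction
      | (subst_vars
         simp [hm])
  | cast i =>
    rw [catDiff_mul_castSucc]
    induction i using Fin.cases with
    | zero =>
      have h₀ : ∀ l, catFlow m a01 up down (Fin.castSucc 0) l = if l.val = 0 then a01 else 0 :=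
        fun l => by simp [catFlow]
      have h₁ : ∀ l, catFlow m a01 up down (Fin.succ 0) l =
          if l.val = 1 then up 0 else if l.val = 0 then -down 0 else 0 :=
        fun l => by simp only [catFlow, Matrix.of_apply, Fin.cases_succ, Fin.ext_iff]; rfl
      rw [h₀, h₁]
      obtain ⟨_ | _ | j, hj⟩ := j
      · simp [catMatrix]
        ring
      · simp [catMatrix]
      · simp [catMatrix]
    | succ k =>
      -- Both forms of each index occur; the anonymous-constructor form comes from `catMatrix`.
      have hk₁ : k.succ = ⟨k.val + 1, by omega⟩ := rfl
      have hk₂ : k.castSucc = ⟨k.val, by omega⟩ := rfl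
      obtain ⟨j, hj⟩ := j
      simp only [catMatrix, catFlow, Matrix.neg_apply, Matrix.of_apply, Fin.cases_succ,
        ← Fin.succ_castSucc, Fin.ext_iff, Fin.val_succ, Fin.val_castSucc, Fin.val_zero]
      split_ifs <;> first
        | omega
        | contradiction
        | (subst_vars
           try simp only [hk₁, hk₂, Nat.add_sub_cancel]
           ring)

/-- The first column of the difference matrix is zero below the diagonal, so its first index
contributes nothing to the product with the first row and column removed. -/
lemma catDiff_mul_submatrix_succ {R : Type*} [CommRing R] {n : ℕ}
    (M : Matrix (Fin (n + 1)) (Fin (n + 1)) R) :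
    (catDiff R (n + 1) * M).submatrix Fin.succ Fin.succ =
      catDiff R n * M.submatrix Fin.succ Fin.succ := by
  ext i j
  simp [Matrix.mul_apply, Fin.sum_univ_succ, catDiff, (Fin.succ_ne_zero _).symm]

lemma charpoly_coeff_zero_eq_det_neg {R : Type*} [CommRing R] {n : ℕ}
    (M : Matrix (Fin n) (Fin n) R) : M.charpoly.coeff 0 = (-M).det := by
  rw [Polynomial.coeff_zero_eq_eval_zero, Matrix.eval_charpoly]
  simp

/-- For the `n`-compartment catenary model (`n = m + 2 ≥ 2`), the
constant coefficient of `det (λI - A)` equals `a₀₁ · a₁₂a₂₃⋯a_{n-1,n}`, and the constant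
coefficient of `det (λI - A₁₁)` equals `a₁₂a₂₃⋯a_{n-1,n}`. -/
theorem cat_constant_coeffs {R : Type*} [CommRing R] (m : ℕ) (a01 : R)
    (up down : Fin (m + 1) → R) :
    (catMatrix m a01 up down).charpoly.coeff 0 = a01 * ∏ k, up k ∧
      ((catMatrix m a01 up down).submatrix Fin.succ Fin.succ).charpoly.coeff 0
        = ∏ k, up k := by
  rw [charpoly_coeff_zero_eq_det_neg, charpoly_coeff_zero_eq_det_neg, 
    show -((catMatrix m a01 up down).submatrix Fin.succ Fin.succ) =
      (-catMatrix m a01 up down).submatrix Fin.succ Fin.succ from rfl,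
    neg_catMatrix_eq_mul, catDiff_mul_submatrix_succ, Matrix.det_mul,
    Matrix.det_mul, det_catDiff, det_catDiff, det_catFlow, det_catFlow_submatrix, one_mul, one_mul]
  exact ⟨rfl, rfl⟩
end

section
/- Let c : ℝ^N → ℝ^k be a polynomial map. Then the following are equivalent: (i) there exists a set Z ⊆ ℝ^N of Lebesgue measure zero such that every point p ∉ Z has an open neighborhood U on which c is injective (i.e., c is generically locally identifiable); (ii) there exists a point of ℝ^N at which the Jacobian matrix of c has rank N. -/
/-!
Write `J` for the Jacobian matrix with polynomial entries and `D = det (Jᵀ J)`. Since a real matrix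
and its Gram matrix have the same rank, `J` has rank `N` at `p` exactly when `D p ≠ 0`.

If `D p ≠ 0` for some `p`, the zero set of the polynomial `D` is Lebesgue null
(`volume_zeros_mvPolynomial`), and off it the inverse function theorem makes the map locally
injective (`exists_injOn_of_gramDet_ne_zero`).

If `D` vanishes everywhere, it is the zero polynomial. Then `Jᵀ J`, a matrix over an integral
domain, kills a nonzero vector `v` of polynomials, and evaluating at real points gives `J v = 0`
(`exists_kernel_field`). The map is constant along the integral curves of the vector field `v`, so
it is injective near no point of the nonempty open set `{v ≠ 0}` (`not_injOn_of_kernel_field`). A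
nonempty open set is not null, so generic local injectivity fails.
-/

open MeasureTheory MvPolynomial Matrix Topology

/-- The derivative of a polynomial function is given by its formal partial derivatives. -/
lemma hasStrictFDerivAt_eval_mvPolynomial {n : ℕ} (f : MvPolynomial (Fin n) ℝ) (p : Fin n → ℝ) :
    HasStrictFDerivAt (fun q : Fin n → ℝ => eval q f)
      (∑ j, eval p (pderiv j f) • ContinuousLinearMap.proj (R := ℝ) (φ := fun _ : Fin n => ℝ) j)
      p := by
  induction f using MvPolynomial.induction_on with
  | C a => simpa using hasStrictFDerivAt_const (𝕜 := ℝ) a p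
  | add f g hf hg =>
    simp only [map_add, add_smul, Finset.sum_add_distrib]
    exact hf.add hg
  | mul_X f i hf =>
    have hX : HasStrictFDerivAt (fun q : Fin n → ℝ => q i)
        (ContinuousLinearMap.proj (R := ℝ) (φ := fun _ : Fin n => ℝ) i) p :=
      (ContinuousLinearMap.proj (R := ℝ) (φ := fun _ : Fin n => ℝ) i).hasStrictFDerivAt
    have h := hf.mul hX
    simp only [map_mul, eval_X]
    refine h.congr_fderiv ?_
    ext w
    simp [pderiv_X, Finset.sum_add_distrib, add_mul, Finset.mul_sum, Pi.single_apply,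
      apply_ite, mul_assoc]

/-- The real zeros of a nonzero polynomial form a Lebesgue null set. By induction on the number of
variables: off the null set where the leading coefficient in the first variable vanishes, each
slice in the direction of that variable is finite. -/
lemma volume_zeros_mvPolynomial {n : ℕ} (f : MvPolynomial (Fin n) ℝ) (hf : f ≠ 0) :
    volume {x : Fin n → ℝ | eval x f = 0} = 0 := by
  induction n with
  | zero =>
    have : {x : Fin 0 → ℝ | eval x f = 0} = ∅ := by
      refine Set.eq_empty_of_forall_notMem fun x hx => hf (MvPolynomial.funext fun y => ?_)
      rw [Subsingleton.elim y x, map_zero]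
      exact hx
    rw [this, measure_empty]
  | succ n ih =>
    have hmeas : MeasurableSet {x : Fin (n + 1) → ℝ | eval x f = 0} :=
      (isClosed_singleton.preimage (MvPolynomial.continuous_eval f)).measurableSet
    have hmp := volume_preserving_piFinSuccAbove (fun _ : Fin (n + 1) => ℝ) 0
    rw [← (hmp.symm _).measure_preimage hmeas.nullMeasurableSet]
    have hmp2 := Measure.measurePreserving_swap
      (μ := (volume : Measure (Fin n → ℝ))) (ν := (volume : Measure ℝ))
    have hmeas' := (hmp.symm _).measurable hmeas
    change (volume.prod volume) _ = 0
    rw [← hmp2.measure_preimage hmeas'.nullMeasurableSet]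
    refine Measure.measure_prod_null_of_ae_null (hmp2.measurable hmeas') ?_
    set g := finSuccEquiv ℝ n f with hg
    have hg0 : g ≠ 0 := by simpa [hg] using hf
    have hae : ∀ᵐ s : Fin n → ℝ, eval s g.leadingCoeff ≠ 0 := by
      rw [ae_iff]
      simpa using ih g.leadingCoeff (Polynomial.leadingCoeff_ne_zero.mpr hg0)
    filter_upwards [hae] with s hs
    have hgs : Polynomial.map (eval s) g ≠ 0 := by
      intro h
      apply hs
      have := congrArg (fun q => Polynomial.coeff q g.natDegree) h
      simpa [Polynomial.coeff_map] using this
    refine Set.Finite.measure_zero ((Polynomial.finite_setOfPred_isRoot hgs).subset ?_) _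
    intro y hy
    have hy' : eval (Fin.cons y s : Fin (n + 1) → ℝ) f = 0 := by
      simpa [MeasurableEquiv.piFinSuccAbove, Fin.insertNthEquiv] using hy
    rw [eval_eq_eval_mv_eval'] at hy'
    exact hy'

/-- The Jacobian matrix of a polynomial map, with polynomial entries; its value at `p` is
`(jacobianPoly P).map (eval p)`. -/
noncomputable def jacobianPoly {N k : ℕ} (P : Fin k → MvPolynomial (Fin N) ℝ) :
    Matrix (Fin k) (Fin N) (MvPolynomial (Fin N) ℝ) :=
  Matrix.of fun i j => pderiv j (P i)

/-- The Gram determinant `det (Jᵀ J)` of the Jacobian matrix, as a polynomial. -/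
noncomputable def gramDet {N k : ℕ} (P : Fin k → MvPolynomial (Fin N) ℝ) :
    MvPolynomial (Fin N) ℝ :=
  ((jacobianPoly P)ᵀ * jacobianPoly P).det

lemma eval_gramDet {N k : ℕ} (P : Fin k → MvPolynomial (Fin N) ℝ) (p : Fin N → ℝ) :
    eval p (gramDet P) =
      (((jacobianPoly P).map (eval p))ᵀ * (jacobianPoly P).map (eval p)).det := by
  rw [gramDet, RingHom.map_det, RingHom.mapMatrix_apply, Matrix.map_mul, Matrix.transpose_map]

lemma rank_eq_iff_det_ne_zero {N : ℕ} (A : Matrix (Fin N) (Fin N) ℝ) :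
    A.rank = N ↔ A.det ≠ 0 := by
  refine ⟨fun h => ?_, fun h => by simpa using Matrix.rank_of_det_ne_zero h⟩
  rw [← isUnit_iff_ne_zero, ← Matrix.isUnit_iff_isUnit_det,
    ← Matrix.linearIndependent_cols_iff_isUnit, linearIndependent_iff_card_eq_finrank_span]
  rw [Matrix.rank_eq_finrank_span_cols] at h
  simpa [Set.finrank] using h.symm

/-- Over `ℝ` a matrix and its Gram matrix have the same rank. -/
lemma rank_jacobian_eq_iff {N k : ℕ} (P : Fin k → MvPolynomial (Fin N) ℝ) (p : Fin N → ℝ) :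
    ((jacobianPoly P).map (eval p)).rank = N ↔ eval p (gramDet P) ≠ 0 := by
  rw [eval_gramDet, ← rank_eq_iff_det_ne_zero, Matrix.rank_transpose_mul_self]

/-- Inverse function theorem: with `A` the Jacobian matrix at `p`, the map `Aᵀ ∘ c` has the
invertible derivative `Aᵀ A` at `p`, so it is injective near `p`, and then so is `c`. -/
lemma exists_injOn_of_gramDet_ne_zero {N k : ℕ} (P : Fin k → MvPolynomial (Fin N) ℝ)
    (p : Fin N → ℝ) (hp : eval p (gramDet P) ≠ 0) :
    ∃ U : Set (Fin N → ℝ), IsOpen U ∧ p ∈ U ∧ Set.InjOn (fun q i => eval q (P i)) U := by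
  set A := (jacobianPoly P).map (eval p) with hA
  rw [eval_gramDet, ← hA] at hp
  have hc : HasStrictFDerivAt (fun (q : Fin N → ℝ) (i : Fin k) => eval q (P i))
      (LinearMap.toContinuousLinearMap (Matrix.toLin' A)) p := by
    rw [hasStrictFDerivAt_pi']
    intro i
    refine (hasStrictFDerivAt_eval_mvPolynomial (P i) p).congr_fderiv ?_
    ext w
    simp [hA, jacobianPoly, Matrix.mulVec, dotProduct]
  have hG := (LinearMap.toContinuousLinearMap (Matrix.toLin' Aᵀ)).hasStrictFDerivAt.comp p hc
  have hunit : IsUnit (Aᵀ * A).det := isUnit_iff_ne_zero.mpr hp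
  let e : (Fin N → ℝ) ≃L[ℝ] (Fin N → ℝ) :=
    (Matrix.toLinearEquiv' (Aᵀ * A) (Matrix.invertibleOfIsUnitDet _ hunit)).toContinuousLinearEquiv
  have he : (LinearMap.toContinuousLinearMap (Matrix.toLin' Aᵀ)).comp
      (LinearMap.toContinuousLinearMap (Matrix.toLin' A)) =
        (e : (Fin N → ℝ) →L[ℝ] (Fin N → ℝ)) := by
    ext1 w
    change Matrix.toLin' Aᵀ (Matrix.toLin' A w) = Matrix.toLin' (Aᵀ * A) w
    simp
  rw [he] at hG
  refine ⟨(hG.toOpenPartialHomeomorph _).source, (hG.toOpenPartialHomeomorph _).open_source,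
    hG.mem_toOpenPartialHomeomorph_source, ?_⟩
  intro x hx y hy hxy
  exact (hG.toOpenPartialHomeomorph _).injOn hx hy
    (congrArg (LinearMap.toContinuousLinearMap (Matrix.toLin' Aᵀ)) hxy)

/-- If the Gram determinant vanishes identically, the Jacobian matrix has a nonzero polynomial
vector field in its kernel. -/
lemma exists_kernel_field {N k : ℕ} (P : Fin k → MvPolynomial (Fin N) ℝ) (h : gramDet P = 0) :
    ∃ v : Fin N → MvPolynomial (Fin N) ℝ, v ≠ 0 ∧
      ∀ (p : Fin N → ℝ) (i : Fin k), ∑ j, eval p (pderiv j (P i)) * eval p (v j) = 0 := by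
  obtain ⟨v, hv, hJ⟩ := Matrix.exists_mulVec_eq_zero_iff.mpr h
  refine ⟨v, hv, fun p i => ?_⟩
  set A := (jacobianPoly P).map (eval p) with hA
  have h1 : (Aᵀ * A) *ᵥ (eval p ∘ v) = 0 := by
    ext j
    have := RingHom.map_mulVec (eval p) ((jacobianPoly P)ᵀ * jacobianPoly P) v j
    rw [hJ, Matrix.map_mul, Matrix.transpose_map] at this
    simpa only [Pi.zero_apply, map_zero] using this.symm
  have h2 : (eval p ∘ v) ∈ LinearMap.ker (Aᵀ * A).mulVecLin := h1
  rw [Matrix.ker_mulVecLin_transpose_mul_self] at h2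
  have h3 := congrFun (show A *ᵥ (eval p ∘ v) = 0 by simpa using h2) i
  simpa [hA, jacobianPoly, Matrix.mulVec, dotProduct] using h3

/-- The map is constant along an integral curve of a vector field in the kernel of its Jacobian
matrix, and such a curve is not constant when it starts where the field does not vanish. -/
lemma not_injOn_of_kernel_field {N k : ℕ} (P : Fin k → MvPolynomial (Fin N) ℝ)
    (v : Fin N → MvPolynomial (Fin N) ℝ)
    (hv : ∀ (p : Fin N → ℝ) (i : Fin k), ∑ j, eval p (pderiv j (P i)) * eval p (v j) = 0)
    (p : Fin N → ℝ) (hp : (fun j => eval p (v j)) ≠ 0)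
    (U : Set (Fin N → ℝ)) (hU : IsOpen U) (hpU : p ∈ U) :
    ¬ Set.InjOn (fun q i => eval q (P i)) U := by
  intro hinj
  have hV : ContDiffAt ℝ 1 (fun (q : Fin N → ℝ) (j : Fin N) => eval q (v j)) p := by
    rw [contDiffAt_pi]
    exact fun j => (AnalyticOnNhd.eval_mvPolynomial (v j) p (Set.mem_univ p)).contDiffAt
  obtain ⟨α, hα0, ε, hε, hα⟩ :=
    hV.exists_forall_mem_closedBall_exists_eq_forall_mem_Ioo_hasDerivAt₀ 0
  simp only [zero_sub, zero_add] at hα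
  have h0 : (0 : ℝ) ∈ Set.Ioo (-ε) ε := ⟨by linarith, hε⟩
  have hderiv : ∀ i, ∀ t ∈ Set.Ioo (-ε) ε,
      HasDerivAt (fun t => eval (α t) (P i)) 0 t := by
    intro i t ht
    have h := (hasStrictFDerivAt_eval_mvPolynomial (P i) (α t)).hasFDerivAt.comp_hasDerivAt t
      (hα t ht)
    refine h.congr_deriv ?_
    simpa using hv (α t) i
  have hconst : ∀ t ∈ Set.Ioo (-ε) ε, ∀ i, eval (α t) (P i) = eval p (P i) := by
    intro t ht i
    have := isOpen_Ioo.is_const_of_deriv_eq_zero isPreconnected_Ioo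
      (fun t ht => (hderiv i t ht).differentiableAt.differentiableWithinAt)
      (fun t ht => (hderiv i t ht).deriv) ht h0
    simpa [hα0] using this
  have hd := hα 0 h0
  have hne : ∀ᶠ t in 𝓝[≠] (0 : ℝ), α t ≠ p := by
    refine hd.eventually_ne ?_
    rwa [hα0]
  have hin : ∀ᶠ t in 𝓝[≠] (0 : ℝ), α t ∈ U :=
    (hd.continuousAt.eventually_mem (by rw [hα0]; exact hU.mem_nhds hpU)).filter_mono
      nhdsWithin_le_nhds
  have hIoo : ∀ᶠ t in 𝓝[≠] (0 : ℝ), t ∈ Set.Ioo (-ε) ε :=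
    nhdsWithin_le_nhds (isOpen_Ioo.mem_nhds h0)
  obtain ⟨t, ht1, ht2, ht3⟩ := (hne.and (hin.and hIoo)).exists
  exact ht1 (hinj ht2 hpU (funext (hconst t ht3)))

/-- For a polynomial map `c : ℝ^N → ℝ^k` (given by polynomials
`P i`), the following are equivalent: (i) there is a Lebesgue-measure-zero set `Z` such
that every point outside `Z` has an open neighborhood on which `c` is injective (i.e. `c`
is generically locally identifiable); (ii) the Jacobian matrix of `c` has rank `N` at
some point. -/
theorem genericallyLocallyInjective_iff_exists_jacobian_fullRank
    (N k : ℕ) (P : Fin k → MvPolynomial (Fin N) ℝ) :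
    (∃ Z : Set (Fin N → ℝ), MeasureTheory.volume Z = 0 ∧
        ∀ p ∉ Z, ∃ U : Set (Fin N → ℝ), IsOpen U ∧ p ∈ U ∧
          Set.InjOn (fun q i => MvPolynomial.eval q (P i)) U) ↔
      (∃ p : Fin N → ℝ,
        (Matrix.of fun (i : Fin k) (j : Fin N) =>
            MvPolynomial.eval p (MvPolynomial.pderiv j (P i))).rank = N) := by
  have hrank : ∀ p : Fin N → ℝ, (Matrix.of fun (i : Fin k) (j : Fin N) =>
      MvPolynomial.eval p (MvPolynomial.pderiv j (P i))).rank = N ↔ eval p (gramDet P) ≠ 0 :=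
    rank_jacobian_eq_iff P
  simp only [hrank]
  constructor
  · rintro ⟨Z, hZ, hinj⟩
    by_contra! hD
    obtain ⟨v, hv0, hv⟩ := exists_kernel_field P
      (MvPolynomial.funext fun p => by rw [hD p, map_zero])
    obtain ⟨j, hj⟩ := Function.ne_iff.mp hv0
    obtain ⟨q, hq⟩ : ∃ q, eval q (v j) ≠ 0 := by
      by_contra! h
      exact hj (MvPolynomial.funext fun p => by rw [h p, Pi.zero_apply, map_zero])
    have hW : IsOpen {x : Fin N → ℝ | eval x (v j) ≠ 0} :=
      isOpen_ne.preimage (MvPolynomial.continuous_eval (v j))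
    obtain ⟨p, hpW, hpZ⟩ : ∃ p, eval p (v j) ≠ 0 ∧ p ∉ Z := by
      by_contra! h
      exact (hW.measure_pos volume ⟨q, hq⟩).ne' (measure_mono_null h hZ)
    obtain ⟨U, hU, hpU, hUinj⟩ := hinj p hpZ
    exact not_injOn_of_kernel_field P v hv p (fun h => hpW (congrFun h j)) U hU hpU hUinj
  · rintro ⟨p, hp⟩
    refine ⟨{x | eval x (gramDet P) = 0}, volume_zeros_mvPolynomial _ ?_,
      fun q hq => exists_injOn_of_gramDet_ne_zero P q hq⟩
    rintro h
    simp [h] at hp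
end
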